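/- Let d ≥ 1, D ≥ 1, and let (A_n)_{n≥1} be rotor-router aggregation in ℤ^d built from any configuration of rotor stacks with discrepancy at most D. Then there is a constant C = C(d), independent of n and D, such that for all n ≥ 1, 𝓛(n^{−1/d} A_n^□ Δ B) ≤ C (n^{−1/2−1/d} Φ(n)^{1/2} + D^{1−1/(8d)} n^{−1/(2d)}), where B ⊆ ℝ^d is the closed Euclidean ball of unit volume centered at the origin. -/

import Mathlib

open scoped BigOperators Pointwise symmDiff
open MeasureTheory Filter

noncomputable section
open scoped Classical
namespace RotorRouterPaper

/-- Sites of the lattice `ℤ^d`. -/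
abbrev Site (d : ℕ) := Fin d → ℤ

/-- The `i`-th standard basis vector of `ℤ^d`. -/
def unitVec (d : ℕ) (i : Fin d) : Site d := fun j => if j = i then 1 else 0

/-- Squared Euclidean norm of a lattice point. -/
def nsq {d : ℕ} (x : Site d) : ℝ := ∑ i, ((x i : ℝ)) ^ 2

/-- Euclidean norm of a lattice point. -/
def enorm {d : ℕ} (x : Site d) : ℝ := Real.sqrt (nsq x)

/-- Adjacency `x ∼ y`: Euclidean distance one. -/
def Adj {d : ℕ} (x y : Site d) : Prop := nsq (x - y) = 1

/-- `ω_d`, the Lebesgue volume of the unit ball in `ℝ^d`. -/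
def ballVol (d : ℕ) : ℝ := (volume (Metric.ball (0 : EuclideanSpace ℝ (Fin d)) 1)).toReal

/-- The lattice ball `B_n = {y ∈ ℤ^d : ω_d ‖y‖^d < n}`. -/
def lball (d n : ℕ) : Set (Site d) := {y | ballVol d * enorm y ^ d < (n : ℝ)}

/-- Characterization of the expected exit time function of a (finite) region `A ⊆ ℤ^d`:
it vanishes off `A` and its discrete Laplacian is `-1` on `A`. -/
def IsExitFun (d : ℕ) (A : Set (Site d)) (e : Site d → ℝ) : Prop :=
  (∀ x, x ∉ A → e x = 0) ∧
  ∀ x ∈ A, (1 / (2 * (d : ℝ))) * (∑ i, (e (x + unitVec d i) + e (x - unitVec d i))) - e x = -1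

/-- The expected exit time function `x ↦ e_x(A)` (the unique function satisfying
`IsExitFun` when `A` is finite). -/
def exitFun (d : ℕ) (A : Set (Site d)) : Site d → ℝ :=
  if h : ∃ e, IsExitFun d A e then h.choose else 0

/-- `ē(A) = sup_x e_x(A)`. -/
def ebar (d : ℕ) (A : Set (Site d)) : ℝ := sSup (Set.range (exitFun d A))

/-- `φ(n) = sup {ē(A) - e_o(B_n) : A ⊆ ℤ^d, |A| = n}`. -/
def phi (d n : ℕ) : ℝ :=
  sSup {t | ∃ A : Set (Site d), A.Finite ∧ A.ncard = n ∧ t = ebar d A - exitFun d (lball d n) 0}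

/-- `Φ(n) = ∑_{j=1}^n φ(j)`. -/
def PhiSum (d n : ℕ) : ℝ := ∑ j ∈ Finset.Icc 1 n, phi d j

/-- `ψ(A) = ∑_{x ∈ A} ‖x‖²`. -/
def psi {d : ℕ} (A : Set (Site d)) : ℝ := ∑ᶠ x ∈ A, nsq x

/-- A cardinal direction in `ℤ^d`: one of `±e_1, …, ±e_d`. -/
abbrev Dir (d : ℕ) := Fin d × Bool

/-- The lattice step vector of a cardinal direction. -/
def dirVec (d : ℕ) (ε : Dir d) : Site d := if ε.2 then unitVec d ε.1 else -unitVec d ε.1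

/-- A configuration of rotor stacks `r` (with `r x i` the direction used for the
`(i+1)`-st visit to `x`) has discrepancy at most `D` if for every site, direction and `m ≥ 1`,
among the first `m` rotors of the stack each direction occurs `m/(2d)` times up to error `D`. -/
def HasDiscrepancy (d : ℕ) (D : ℝ) (r : Site d → ℕ → Dir d) : Prop :=
  ∀ (x : Site d) (ε : Dir d) (m : ℕ), 1 ≤ m →
    |(({i | i < m ∧ r x i = ε} : Set ℕ).ncard : ℝ) - (m : ℝ) / (2 * (d : ℝ))| ≤ D

/-- One step of rotor-router walk on a state (current position, visit counts so far):
the particle at `p` being visited for the `(c p + 1)`-st time moves in direction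
`r p (c p)` and the visit count at `p` increases by one. -/
def rstep {d : ℕ} (r : Site d → ℕ → Dir d) (s : Site d × (Site d → ℕ)) :
    Site d × (Site d → ℕ) :=
  (s.1 + dirVec d (r s.1 (s.2 s.1)), Function.update s.2 s.1 (s.2 s.1 + 1))

/-- The state after `t` steps of rotor-router walk started at the origin with visit counts `c`. -/
def walkState {d : ℕ} (r : Site d → ℕ → Dir d) (c : Site d → ℕ) (t : ℕ) :
    Site d × (Site d → ℕ) :=
  (rstep r)^[t] (0, c)

/-- The number of steps until the rotor-router walk started at the origin
(with carried-over visit counts `c`) first leaves the region `A`. -/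
def exitSteps {d : ℕ} (r : Site d → ℕ → Dir d) (A : Set (Site d)) (c : Site d → ℕ) : ℕ :=
  sInf {t | (walkState r c t).1 ∉ A}

/-- The state of rotor-router aggregation after `n` particles have walked and settled:
`(aggState r n).1` is the occupied region `A_{n+1}`, `(aggState r n).2.1` the accumulated
visit counts, and `(aggState r n).2.2` the total number `T_n` of steps taken so far. -/
def aggState {d : ℕ} (r : Site d → ℕ → Dir d) : ℕ → Set (Site d) × (Site d → ℕ) × ℕ
  | 0 => ({0}, fun _ => 0, 0)
  | n + 1 =>
      let s := aggState r n
      let τ := exitSteps r s.1 s.2.1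
      (insert (walkState r s.2.1 τ).1 s.1, (walkState r s.2.1 τ).2, s.2.2 + τ)

/-- The region `A_n` of rotor-router aggregation (for `n ≥ 1`). -/
def aggRegion {d : ℕ} (r : Site d → ℕ → Dir d) (n : ℕ) : Set (Site d) :=
  (aggState r (n - 1)).1

/-- `T_n`, the total number of steps taken by the first `n` particles. -/
def totalSteps {d : ℕ} (r : Site d → ℕ → Dir d) (n : ℕ) : ℕ := (aggState r n).2.2

/-- `A^□ = A + [-1/2,1/2]^d ⊆ ℝ^d`. -/
def box (d : ℕ) (A : Set (Site d)) : Set (EuclideanSpace ℝ (Fin d)) :=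
  {z | ∃ x ∈ A, ∀ i, |z i - (x i : ℝ)| ≤ 1 / 2}

/-- The closed Euclidean ball of unit volume centered at the origin of `ℝ^d`. -/
def unitVolBall (d : ℕ) : Set (EuclideanSpace ℝ (Fin d)) :=
  Metric.closedBall 0 (ballVol d ^ (-(1 : ℝ) / (d : ℝ)))

/-- `A ⊆ ℤ^d` is orthoconvex if every line parallel to a coordinate axis meets `A`
in an interval. -/
def Orthoconvex (d : ℕ) (A : Set (Site d)) : Prop :=
  ∀ x ∈ A, ∀ i : Fin d, ∀ k : ℤ, 0 < k → x + k • unitVec d i ∈ A →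
    ∀ j : ℤ, 0 < j → j < k → x + j • unitVec d i ∈ A

/-- The nonnegative orthant `Q ⊆ ℤ^d`. -/
def orthant (d : ℕ) : Set (Site d) := {x | ∀ i, 0 ≤ x i}

/-- The cube `C(o,r) = {x : ‖x‖_∞ ≤ r}`. -/
def cubeSet (d : ℕ) (r : ℕ) : Set (Site d) := {x | ∀ i, |x i| ≤ (r : ℤ)}

/-- The boundary `∂C(o,r) = {x : ‖x‖_∞ = r + 1 and x ∼ y for some y ∈ C(o,r)}`. -/
def cubeBdry (d : ℕ) (r : ℕ) : Set (Site d) :=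
  {x | (∀ i, |x i| ≤ (r : ℤ) + 1) ∧ (∃ i, |x i| = (r : ℤ) + 1) ∧ ∃ y ∈ cubeSet d r, Adj x y}

/-- Characterization of `h_r(x) = P_x(T_Q > T_{∂C(o,r)})`: it vanishes on
`Q ∩ (C(o,r) ∪ ∂C(o,r))`, equals `1` on `∂C(o,r) ∖ Q`, is discrete harmonic on
`C(o,r) ∖ Q`, and (as a normalization) vanishes off `C(o,r) ∪ ∂C(o,r)`. -/
def IsOrthHarm (d : ℕ) (r : ℕ) (h : Site d → ℝ) : Prop :=
  (∀ x, x ∉ cubeSet d r ∪ cubeBdry d r → h x = 0) ∧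
  (∀ x ∈ orthant d ∩ (cubeSet d r ∪ cubeBdry d r), h x = 0) ∧
  (∀ x ∈ cubeBdry d r \ orthant d, h x = 1) ∧
  (∀ x ∈ cubeSet d r \ orthant d,
    h x = (1 / (2 * (d : ℝ))) * ∑ i, (h (x + unitVec d i) + h (x - unitVec d i)))

/-- The function `h_r` of the previous characterization. -/
def orthHarm (d : ℕ) (r : ℕ) : Site d → ℝ :=
  if h : ∃ f, IsOrthHarm d r f then h.choose else 0

/-- `p(k,r) = sup {h_r(x) : ‖x‖_∞ ≤ k}`. -/
def pkr (d k r : ℕ) : ℝ :=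
  sSup {t | ∃ x : Site d, (∀ i, |x i| ≤ (k : ℤ)) ∧ t = orthHarm d r x}

/-- The exponent `γ_d` of Theorem 3.1. -/
def gam (d : ℕ) : ℝ :=
  if d = 1 then 1 else if d = 2 then 1 / 3
  else (2 : ℝ) ^ (-(d : ℝ)) / (2 * (d : ℝ) ^ 2 * Real.log 3)


/-- Mean of a function over the neighbours. -/
def nmean (d : ℕ) (f : Site d → ℝ) (x : Site d) : ℝ :=
  (1 / (2 * (d : ℝ))) * (∑ i, (f (x + unitVec d i) + f (x - unitVec d i)))

/-- Minimum principle. -/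
theorem min_principle {d : ℕ} (hd : 1 ≤ d) (A : Finset (Site d)) (h : Site d → ℝ)
    (hsup : ∀ x ∈ A, nmean d h x ≤ h x)
    (hb : ∀ x ∈ A, ∀ i, (x + unitVec d i ∉ A → 0 ≤ h (x + unitVec d i)) ∧
      (x - unitVec d i ∉ A → 0 ≤ h (x - unitVec d i))) :
    ∀ x ∈ A, 0 ≤ h x := by
  by_contra! hcon
  obtain ⟨x0, hx0, hx0neg⟩ := hcon
  obtain ⟨x1, hx1, hmin⟩ := A.exists_min_image h ⟨x0, hx0⟩
  set i0 : Fin d := ⟨0, hd⟩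
  have hne : (A.filter (fun x => h x = h x1)).Nonempty := ⟨x1, by simp [hx1]⟩
  obtain ⟨x, hx, hmax⟩ := (A.filter (fun x => h x = h x1)).exists_max_image (fun x => x i0) hne
  rw [Finset.mem_filter] at hx
  obtain ⟨hxA, hxe⟩ := hx
  have hneg : h x < 0 := by rw [hxe]; exact (hmin x0 hx0).trans_lt hx0neg
  have hle : ∀ y ∈ A, h x ≤ h y := fun y hy => by rw [hxe]; exact hmin y hy
  have hp : ∀ i, h x ≤ h (x + unitVec d i) := fun i => by
    by_cases hy : x + unitVec d i ∈ A
    · exact hle _ hy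
    · exact hneg.le.trans ((hb x hxA i).1 hy)
  have hm : ∀ i, h x ≤ h (x - unitVec d i) := fun i => by
    by_cases hy : x - unitVec d i ∈ A
    · exact hle _ hy
    · exact hneg.le.trans ((hb x hxA i).2 hy)
  have hdpos : (0 : ℝ) < d := by exact_mod_cast hd
  have hlap := hsup x hxA
  unfold nmean at hlap
  rw [one_div, inv_mul_le_iff₀ (by positivity)] at hlap
  have hsum : ∑ i : Fin d, (h (x + unitVec d i) + h (x - unitVec d i) - 2 * h x) ≤ 0 := by
    rw [Finset.sum_sub_distrib]; simp; linarith
  have hi0 : h (x + unitVec d i0) + h (x - unitVec d i0) - 2 * h x ≤ 0 := by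
    refine le_trans ?_ hsum
    exact Finset.single_le_sum
      (f := fun i => h (x + unitVec d i) + h (x - unitVec d i) - 2 * h x)
      (fun i _ => by have := hp i; have := hm i; linarith) (Finset.mem_univ i0)
  have heq : h (x + unitVec d i0) = h x := by
    have := hp i0; have := hm i0; linarith
  have hmem : x + unitVec d i0 ∈ A := by
    by_contra hy
    have := (hb x hxA i0).1 hy
    linarith
  have := hmax (x + unitVec d i0) (by rw [Finset.mem_filter]; exact ⟨hmem, by rw [heq, hxe]⟩)
  simp [unitVec] at this

theorem nmean_sub {d : ℕ} (f g : Site d → ℝ) (x : Site d) :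
    nmean d (fun y => f y - g y) x = nmean d f x - nmean d g x := by
  unfold nmean
  rw [← mul_sub, ← Finset.sum_sub_distrib]
  congr 1; apply Finset.sum_congr rfl; intros; ring

theorem nmean_neg {d : ℕ} (f : Site d → ℝ) (x : Site d) :
    nmean d (fun y => - f y) x = - nmean d f x := by
  unfold nmean
  rw [← mul_neg, ← Finset.sum_neg_distrib]
  congr 1; apply Finset.sum_congr rfl; intros; ring

theorem nmean_const {d : ℕ} (hd : 1 ≤ d) (c : ℝ) (x : Site d) :
    nmean d (fun _ => c) x = c := by
  unfold nmean
  have hdpos : (0 : ℝ) < d := by exact_mod_cast hd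
  simp
  field_simp
  ring

/-- Extension by zero. -/
def ext0 {d : ℕ} (A : Finset (Site d)) (g : A → ℝ) (x : Site d) : ℝ :=
  if h : x ∈ A then g ⟨x, h⟩ else 0

/-- The Dirichlet Laplacian. -/
def dirLap {d : ℕ} (A : Finset (Site d)) : (A → ℝ) →ₗ[ℝ] (A → ℝ) where
  toFun g := fun x => nmean d (ext0 A g) x - ext0 A g x
  map_add' f g := by
    have : ext0 A (f + g) = fun y => ext0 A f y + ext0 A g y := by
      funext y; unfold ext0; split_ifs <;> simp
    funext x
    simp only [Pi.add_apply, this, nmean]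
    have : ∀ i, (ext0 A f (x + unitVec d i) + ext0 A g (x + unitVec d i)
      + (ext0 A f (x - unitVec d i) + ext0 A g (x - unitVec d i)))
      = (ext0 A f (x + unitVec d i) + ext0 A f (x - unitVec d i))
      + (ext0 A g (x + unitVec d i) + ext0 A g (x - unitVec d i)) := fun i => by ring
    simp only [this, Finset.sum_add_distrib]; ring
  map_smul' c g := by
    have : ext0 A (c • g) = fun y => c * ext0 A g y := by
      funext y; unfold ext0; split_ifs <;> simp
    funext x
    simp only [Pi.smul_apply, smul_eq_mul, RingHom.id_apply, this, nmean]
    simp only [← mul_add, ← Finset.mul_sum]; ring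

theorem exists_exitFun {d : ℕ} (hd : 1 ≤ d) (A : Finset (Site d)) :
    ∃ e, IsExitFun d (A : Set (Site d)) e := by
  have hinj : Function.Injective (dirLap A) := by
    rw [← LinearMap.ker_eq_bot, LinearMap.ker_eq_bot']
    intro g hg
    have h0 : ∀ x ∈ A, nmean d (ext0 A g) x = ext0 A g x := fun x hx => by
      have := congrFun hg ⟨x, hx⟩
      simp only [dirLap, LinearMap.coe_mk, AddHom.coe_mk, Pi.zero_apply] at this
      linarith
    have hz : ∀ x, x ∉ A → ext0 A g x = 0 := fun x hx => by simp [ext0, hx]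
    have h1 := min_principle hd A (ext0 A g) (fun x hx => (h0 x hx).le)
      (fun x hx i => ⟨fun h => (hz _ h).ge, fun h => (hz _ h).ge⟩)
    have h2 := min_principle hd A (fun y => - ext0 A g y)
      (fun x hx => by rw [nmean_neg, h0 x hx])
      (fun x hx i => ⟨fun h => by simp [hz _ h], fun h => by simp [hz _ h]⟩)
    funext x
    have a := h1 x x.2
    have b := h2 x x.2
    simp only [ext0, x.2, dite_true] at a b
    simp only [Pi.zero_apply]
    linarith
  obtain ⟨g, hg⟩ := (LinearMap.injective_iff_surjective.mp hinj) (fun _ => -1)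
  refine ⟨ext0 A g, fun x hx => ?_, fun x hx => ?_⟩
  · have hx' : x ∉ A := by simpa using hx
    simp [ext0, hx']
  · exact congrFun hg ⟨x, hx⟩

theorem exitFun_spec {d : ℕ} (hd : 1 ≤ d) (A : Finset (Site d)) :
    (∀ x, x ∉ A → exitFun d A x = 0) ∧
      ∀ x ∈ A, nmean d (exitFun d A) x - exitFun d A x = -1 := by
  have h := exists_exitFun hd A
  have := h.choose_spec
  unfold exitFun
  rw [dif_pos h]
  refine ⟨fun x hx => this.1 x (by simpa using hx), fun x hx => this.2 x hx⟩

theorem exitFun_nonneg {d : ℕ} (hd : 1 ≤ d) (A : Finset (Site d)) (x : Site d) :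
    0 ≤ exitFun d A x := by
  obtain ⟨h1, h2⟩ := exitFun_spec hd A
  by_cases hx : x ∈ A
  · exact min_principle hd A _ (fun x hx => by have := h2 x hx; linarith)
      (fun x hx i => ⟨fun h => (h1 _ h).ge, fun h => (h1 _ h).ge⟩) x hx
  · exact (h1 x hx).ge

theorem exitFun_le_ebar {d : ℕ} (hd : 1 ≤ d) (A : Finset (Site d)) (x : Site d) :
    exitFun d A x ≤ ebar d A := by
  apply le_csSup
  · have : (Set.range (exitFun d (A : Set (Site d)))).Finite := by
      refine Set.Finite.subset ((A.image (exitFun d (A : Set (Site d)))).finite_toSet.union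
        (Set.finite_singleton (0 : ℝ))) ?_
      rintro _ ⟨y, rfl⟩
      by_cases hy : y ∈ A
      · left; simp only [Finset.coe_image]; exact ⟨y, hy, rfl⟩
      · right; exact (exitFun_spec hd A).1 y hy
    exact this.bddAbove
  · exact ⟨x, rfl⟩

theorem ebar_le {d : ℕ} (A : Finset (Site d)) (b : ℝ) (h : ∀ x, exitFun d A x ≤ b) :
    ebar d A ≤ b := by
  apply csSup_le (Set.range_nonempty _)
  rintro _ ⟨x, rfl⟩; exact h x

/-- Chain of superlevel sets. -/
theorem chain_bound {d : ℕ} (hd : 1 ≤ d) (u : Site d → ℝ) (K : ℕ → ℝ)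
    (hK : ∀ S : Finset (Site d), exitFun d S 0 ≤ K S.card) :
    ∀ (n : ℕ) (S : Finset (Site d)), S.card = n →
      (∀ x ∈ S, nmean d u x - u x = -1) → (∀ x ∉ S, ∀ y ∈ S, u x ≤ u y) →
      ∑ x ∈ S, (u 0 - u x) ≤ ∑ j ∈ Finset.range n, K j := by
  intro n
  induction n with
  | zero => intro S hS _ _; rw [Finset.card_eq_zero] at hS; simp [hS]
  | succ n ih =>
    intro S hS hu hlev
    have hne : S.Nonempty := by rw [← Finset.card_pos]; omega
    obtain ⟨x, hx, hmin⟩ := S.exists_min_image u hne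
    have hcard : (S.erase x).card = n := by rw [Finset.card_erase_of_mem hx]; omega
    have hout : ∀ y, y ∉ S.erase x → u y ≤ u x := by
      intro y hy
      by_cases hyS : y ∈ S
      · have : y = x := by by_contra h; exact hy (Finset.mem_erase.mpr ⟨h, hyS⟩)
        rw [this]
      · exact hlev y hyS x hx
    have h1 := ih (S.erase x) hcard (fun y hy => hu y (Finset.mem_of_mem_erase hy))
      (fun y hy z hz => (hout y hy).trans (hmin z (Finset.mem_of_mem_erase hz)))
    have h2 : u 0 - u x ≤ K n := by
      refine le_trans ?_ (hcard ▸ hK (S.erase x))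
      obtain ⟨e1, e2⟩ := exitFun_spec hd (S.erase x)
      by_cases h0 : (0 : Site d) ∈ S.erase x
      · have := min_principle hd (S.erase x)
          (fun y => exitFun d (S.erase x) y - (u y - u x))
          (fun y hy => by
            rw [nmean_sub, nmean_sub, nmean_const hd]
            have := e2 y hy
            have := hu y (Finset.mem_of_mem_erase hy)
            linarith)
          (fun y hy i => ⟨fun h => by have := hout _ h; rw [e1 _ h]; linarith,
            fun h => by have := hout _ h; rw [e1 _ h]; linarith⟩) 0 h0
        linarith
      · have := hout 0 h0
        have := exitFun_nonneg hd (S.erase x) 0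
        linarith
    rw [Finset.sum_range_succ, ← Finset.sum_erase_add S _ hx]
    linarith

/-- L1 norm of `u(·+z) - u`. -/
def tv {d : ℕ} (u : Site d → ℝ) (z : Site d) : ℝ := ∑' x, |u (x + z) - u x|

theorem fs_shift {d : ℕ} {u : Site d → ℝ} (hu : u.support.Finite) (z : Site d) :
    (fun x => u (x + z)).support.Finite := by
  have : (fun x => u (x + z)).support = (fun x => x + z) ⁻¹' u.support := rfl
  rw [this]
  exact hu.preimage (add_left_injective z).injOn

theorem summable_fs {d : ℕ} {f : Site d → ℝ} (hf : f.support.Finite) : Summable f :=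
  summable_of_hasFiniteSupport hf

theorem fs_tv {d : ℕ} {u : Site d → ℝ} (hu : u.support.Finite) (z : Site d) :
    (fun x => |u (x + z) - u x|).support.Finite := by
  refine ((fs_shift hu z).union hu).subset ?_
  intro x hx
  simp only [Function.mem_support, Set.mem_union] at *
  by_contra! h
  simp [h.1, h.2] at hx

theorem tsum_shift {d : ℕ} (f : Site d → ℝ) (z : Site d) :
    ∑' x, f (x + z) = ∑' x, f x := (Equiv.addRight z).tsum_eq f

theorem tv_nonneg {d : ℕ} (u : Site d → ℝ) (z : Site d) : 0 ≤ tv u z :=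
  tsum_nonneg fun _ => abs_nonneg _

theorem tv_add {d : ℕ} {u : Site d → ℝ} (hu : u.support.Finite) (z w : Site d) :
    tv u (z + w) ≤ tv u z + tv u w := by
  have h1 := summable_fs (fs_tv hu z)
  have h2 := summable_fs (fs_tv hu w)
  have h3 := summable_fs (fs_tv hu (z + w))
  have h1' : Summable (fun x => |u (x + w + z) - u (x + w)|) :=
    h1.comp_injective (add_left_injective w)
  have : tv u z = ∑' x, |u (x + w + z) - u (x + w)| :=
    (tsum_shift (fun x => |u (x + z) - u x|) w).symm
  rw [this]
  unfold tv
  rw [← h1'.tsum_add h2]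
  refine h3.tsum_le_tsum (fun x => ?_) (h1'.add h2)
  have : x + (z + w) = x + w + z := by abel
  rw [this]
  exact abs_sub_le _ _ _

theorem tv_zero {d : ℕ} (u : Site d → ℝ) : tv u 0 = 0 := by simp [tv]

theorem tv_neg {d : ℕ} (u : Site d → ℝ) (z : Site d) : tv u (-z) = tv u z := by
  unfold tv
  rw [← tsum_shift (fun x => |u (x + -z) - u x|) z]
  congr 1; funext x
  rw [add_neg_cancel_right, abs_sub_comm]

theorem tv_nsmul {d : ℕ} {u : Site d → ℝ} (hu : u.support.Finite) (k : ℕ) (z : Site d) :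
    tv u (k • z) ≤ k * tv u z := by
  induction k with
  | zero => simp [tv_zero]
  | succ k ih =>
    rw [succ_nsmul]
    refine (tv_add hu _ _).trans ?_
    push_cast; linarith

theorem tv_sum {d : ℕ} {u : Site d → ℝ} (hu : u.support.Finite) (s : Finset (Fin d))
    (f : Fin d → Site d) : tv u (∑ i ∈ s, f i) ≤ ∑ i ∈ s, tv u (f i) := by
  induction s using Finset.induction_on with
  | empty => simp [tv_zero]
  | insert a s ha ih =>
    rw [Finset.sum_insert ha, Finset.sum_insert ha]
    exact (tv_add hu _ _).trans (by linarith)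

/-- Total L1 gradient. -/
def grad1 {d : ℕ} (u : Site d → ℝ) : ℝ := ∑ i, tv u (unitVec d i)

theorem grad1_nonneg {d : ℕ} (u : Site d → ℝ) : 0 ≤ grad1 u :=
  Finset.sum_nonneg fun _ _ => tv_nonneg _ _

theorem tv_box {d : ℕ} {u : Site d → ℝ} (hu : u.support.Finite) (r : ℕ) (z : Fin d → Fin r) :
    tv u (fun i => ((z i : ℕ) : ℤ)) ≤ r * grad1 u := by
  have : (fun i => ((z i : ℕ) : ℤ)) = ∑ i, (z i : ℕ) • unitVec d i := by
    funext j
    simp [Finset.sum_apply, unitVec]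
  rw [this]
  refine (tv_sum hu _ _).trans ?_
  unfold grad1
  rw [Finset.mul_sum]
  refine Finset.sum_le_sum fun i _ => (tv_nsmul hu _ _).trans ?_
  gcongr
  · exact tv_nonneg _ _
  · exact (z i).2.le

theorem sum_le_grad1 {d : ℕ} (A : Finset (Site d)) (u : Site d → ℝ) (hu0 : ∀ x, 0 ≤ u x)
    (huA : ∀ x, x ∉ A → u x = 0) (r : ℕ) (hr : 2 * A.card ≤ r ^ d) (hr1 : 1 ≤ r) :
    ∑ x ∈ A, u x ≤ 2 * r * grad1 u := by
  have hu : u.support.Finite := A.finite_toSet.subset (fun x hx => by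
    by_contra h; exact hx (huA x (by simpa using h)))
  set ι : (Fin d → Fin r) → Site d := fun z i => ((z i : ℕ) : ℤ) with hι
  have hinj : Function.Injective ι := by
    intro z w h
    funext i
    have := congrFun h i
    simp only [hι] at this
    exact Fin.ext (by exact_mod_cast this)
  have h1 : ∀ z, ∑ x ∈ A, |u (x + ι z) - u x| ≤ r * grad1 u := fun z =>
    ((summable_fs (fs_tv hu (ι z))).sum_le_tsum A (fun _ _ => abs_nonneg _)).trans (tv_box hu r z)
  have h2 : ∑ z, ∑ x ∈ A, |u (x + ι z) - u x| ≤ (r : ℝ) ^ d * (r * grad1 u) := by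
    refine (Finset.sum_le_sum fun z _ => h1 z).trans ?_
    simp
  rw [Finset.sum_comm] at h2
  have h3 : ∀ x ∈ A, (r : ℝ) ^ d / 2 * u x ≤ ∑ z, |u (x + ι z) - u x| := by
    intro x hx
    set G := (Finset.univ : Finset (Fin d → Fin r)).filter (fun z => x + ι z ∈ A)
    set Bd := (Finset.univ : Finset (Fin d → Fin r)).filter (fun z => x + ι z ∉ A)
    have hG : G.card ≤ A.card := by
      apply Finset.card_le_card_of_injOn (fun z => x + ι z)
      · intro z hz; simpa [G] using hz
      · intro z _ w _ h; exact hinj (add_left_cancel h)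
    have hGB : G.card + Bd.card = r ^ d := by
      have := Finset.card_filter_add_card_filter_not (s := (Finset.univ : Finset (Fin d → Fin r)))
        (fun z => x + ι z ∈ A)
      simpa using this
    have hB : (r : ℝ) ^ d / 2 ≤ Bd.card := by
      have : r ^ d ≤ 2 * Bd.card := by omega
      have : ((r ^ d : ℕ) : ℝ) ≤ ((2 * Bd.card : ℕ) : ℝ) := by exact_mod_cast this
      push_cast at this; linarith
    calc (r : ℝ) ^ d / 2 * u x ≤ Bd.card * u x := by gcongr; exact hu0 x
      _ = ∑ z ∈ Bd, |u (x + ι z) - u x| := by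
        rw [← nsmul_eq_mul, ← Finset.sum_const]
        apply Finset.sum_congr rfl
        intro z hz
        have : x + ι z ∉ A := by simpa [Bd] using hz
        rw [huA _ this, zero_sub, abs_neg, abs_of_nonneg (hu0 x)]
      _ ≤ _ := Finset.sum_le_sum_of_subset_of_nonneg (Finset.subset_univ _)
        (fun _ _ _ => abs_nonneg _)
  have h4 := (Finset.sum_le_sum h3).trans h2
  rw [← Finset.mul_sum] at h4
  have hrp : (0 : ℝ) < (r : ℝ) ^ d := by positivity
  have : (r : ℝ) ^ d * (∑ x ∈ A, u x) ≤ (r : ℝ) ^ d * (2 * r * grad1 u) := by linarith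
  exact le_of_mul_le_mul_left this hrp

theorem tv_sq_le {d : ℕ} (A : Finset (Site d)) (u : Site d → ℝ)
    (huA : ∀ x, x ∉ A → u x = 0) (z : Site d) :
    tv u z ^ 2 ≤ 2 * A.card * ∑' x, (u (x + z) - u x) ^ 2 := by
  set S := A ∪ A.image (fun x => x - z)
  have hS : ∀ x, x ∉ S → u (x + z) - u x = 0 := by
    intro x hx
    simp only [S, Finset.mem_union, Finset.mem_image, not_or, not_exists, not_and] at hx
    rw [huA x hx.1, huA (x + z) (fun h => hx.2 _ h (by abel))]; simp
  have e1 : tv u z = ∑ x ∈ S, |u (x + z) - u x| :=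
    tsum_eq_sum (fun x hx => by rw [hS x hx, abs_zero])
  have e2 : ∑' x, (u (x + z) - u x) ^ 2 = ∑ x ∈ S, (u (x + z) - u x) ^ 2 :=
    tsum_eq_sum (fun x hx => by rw [hS x hx]; simp)
  rw [e1, e2]
  have hc : (S.card : ℝ) ≤ 2 * A.card := by
    have h1 : S.card ≤ _ := Finset.card_union_le A (A.image (fun x => x - z))
    have h2 : (A.image (fun x => x - z)).card ≤ A.card := Finset.card_image_le
    have : S.card ≤ 2 * A.card := by omega
    exact_mod_cast this
  refine (sq_sum_le_card_mul_sum_sq).trans ?_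
  simp only [sq_abs]
  gcongr

theorem energy_eq {d : ℕ} (hd : 1 ≤ d) (A : Finset (Site d)) (u : Site d → ℝ)
    (huA : ∀ x, x ∉ A → u x = 0) (hL : ∀ x ∈ A, nmean d u x - u x = -1) :
    ∑ i, ∑' x, (u (x + unitVec d i) - u x) ^ 2 = 2 * d * ∑ x ∈ A, u x := by
  have hdpos : (0 : ℝ) < d := by exact_mod_cast hd
  have hu : u.support.Finite := A.finite_toSet.subset (fun x hx => by
    by_contra h; exact hx (huA x (by simpa using h)))
  have smul : ∀ g : Site d → ℝ, Summable (fun x => u x * g x) := fun g =>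
    summable_fs (hu.subset (fun x hx => by
      simp only [Function.mem_support] at *; exact left_ne_zero_of_mul hx))
  have key : ∀ i, ∑' x, (u (x + unitVec d i) - u x) ^ 2 =
      ∑' x, u x * (2 * u x - u (x + unitVec d i) - u (x - unitVec d i)) := by
    intro i
    set z := unitVec d i
    have a1 := smul (fun x => u x - u (x - z))
    have a2 := smul (fun x => u x - u (x + z))
    have a1' : Summable (fun x => u (x + z) * (u (x + z) - u (x + z - z))) :=
      a1.comp_injective (add_left_injective z)
    have e1 : ∑' x, u x * (u x - u (x - z)) = ∑' x, u (x + z) * (u (x + z) - u (x + z - z)) :=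
      (tsum_shift (fun x => u x * (u x - u (x - z))) z).symm
    have : ∑' x, u x * (2 * u x - u (x + z) - u (x - z)) =
        ∑' x, u x * (u x - u (x - z)) + ∑' x, u x * (u x - u (x + z)) := by
      rw [← a1.tsum_add a2]
      congr 1; funext x; ring
    rw [this, e1, ← a1'.tsum_add a2]
    congr 1; funext x
    rw [add_sub_cancel_right]; ring
  simp only [key]
  rw [← Summable.tsum_finsetSum (fun i _ => smul _), tsum_eq_sum (s := A)
    (fun x hx => by simp [huA x hx]), Finset.mul_sum]
  refine Finset.sum_congr rfl fun x hx => ?_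
  rw [← Finset.mul_sum]
  have := hL x hx
  unfold nmean at this
  have h2 : ∑ i, (u (x + unitVec d i) + u (x - unitVec d i)) = 2 * d * (u x - 1) := by
    field_simp at this
    linarith
  have h3 : ∑ i, (2 * u x - u (x + unitVec d i) - u (x - unitVec d i)) =
      2 * d * u x - ∑ i, (u (x + unitVec d i) + u (x - unitVec d i)) := by
    simp only [sub_sub, Finset.sum_sub_distrib]; simp; ring
  rw [h3, h2]; ring

theorem grad1_bound {d : ℕ} (hd : 1 ≤ d) (A : Finset (Site d)) (u : Site d → ℝ)
    (hu0 : ∀ x, 0 ≤ u x)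
    (huA : ∀ x, x ∉ A → u x = 0) (hL : ∀ x ∈ A, nmean d u x - u x = -1)
    (r : ℕ) (hr : 2 * A.card ≤ r ^ d) (hr1 : 1 ≤ r) :
    grad1 u ≤ 8 * d ^ 2 * A.card * r := by
  have h1 := sum_le_grad1 A u hu0 huA r hr hr1
  have h2 : grad1 u ^ 2 ≤ 4 * d ^ 2 * A.card * ∑ x ∈ A, u x := by
    have e := energy_eq hd A u huA hL
    calc grad1 u ^ 2 ≤ d * ∑ i, tv u (unitVec d i) ^ 2 := by
          have := sq_sum_le_card_mul_sum_sq (s := (Finset.univ : Finset (Fin d)))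
            (f := fun i => tv u (unitVec d i))
          simpa [grad1] using this
      _ ≤ d * ∑ i, 2 * A.card * ∑' x, (u (x + unitVec d i) - u x) ^ 2 := by
          gcongr with i
          exact tv_sq_le A u huA _
      _ = _ := by rw [← Finset.mul_sum, e]; ring
  have h3 : grad1 u * grad1 u ≤ (8 * d ^ 2 * A.card * r) * grad1 u := by
    calc grad1 u * grad1 u = grad1 u ^ 2 := by ring
      _ ≤ _ := h2
      _ ≤ 4 * d ^ 2 * A.card * (2 * r * grad1 u) := by gcongr
      _ = _ := by ring
  rcases (grad1_nonneg u).eq_or_lt with h | h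
  · rw [← h]; positivity
  · exact le_of_mul_le_mul_right h3 h

theorem sum_abs_nbr_le {d : ℕ} (A : Finset (Site d)) (u : Site d → ℝ)
    (huA : ∀ x, x ∉ A → u x = 0) :
    ∑ x ∈ A, ∑ i, (|u (x + unitVec d i) - u x| + |u (x - unitVec d i) - u x|) ≤ 2 * grad1 u := by
  have hu : u.support.Finite := A.finite_toSet.subset (fun x hx => by
    by_contra h; exact hx (huA x (by simpa using h)))
  rw [Finset.sum_comm]
  unfold grad1
  rw [Finset.mul_sum]
  refine Finset.sum_le_sum fun i _ => ?_
  rw [Finset.sum_add_distrib, two_mul]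
  refine add_le_add ?_ ?_
  · exact (summable_fs (fs_tv hu _)).sum_le_tsum A (fun _ _ => abs_nonneg _)
  · rw [← tv_neg]
    simp only [sub_eq_add_neg _ (unitVec d i)]
    exact (summable_fs (fs_tv hu _)).sum_le_tsum A (fun _ _ => abs_nonneg _)

/-- Accumulated change of `f` due to the first `m` rotors at `x`. -/
def hsum {d : ℕ} (r : Site d → ℕ → Dir d) (f : Site d → ℝ) (x : Site d) (m : ℕ) : ℝ :=
  ∑ i ∈ Finset.range m, (f (x + dirVec d (r x i)) - f x)

theorem sum_dir {d : ℕ} (g : Site d → ℝ) :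
    ∑ ε : Dir d, g (dirVec d ε) = ∑ i, (g (unitVec d i) + g (-unitVec d i)) := by
  rw [Fintype.sum_prod_type]
  refine Finset.sum_congr rfl fun i _ => ?_
  simp [dirVec]

theorem hsum_eq {d : ℕ} (r : Site d → ℕ → Dir d) (f : Site d → ℝ) (x : Site d) (m : ℕ) :
    hsum r f x m = ∑ ε : Dir d, (({i | i < m ∧ r x i = ε} : Set ℕ).ncard : ℝ) *
      (f (x + dirVec d ε) - f x) := by
  unfold hsum
  rw [← Finset.sum_fiberwise (Finset.range m) (fun i => r x i)]
  refine Finset.sum_congr rfl fun ε _ => ?_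
  have : ({i | i < m ∧ r x i = ε} : Set ℕ) =
      ((Finset.range m).filter (fun i => r x i = ε) : Finset ℕ) := by
    ext i; simp
  rw [this, Set.ncard_coe_finset, ← nsmul_eq_mul, ← Finset.sum_const]
  refine Finset.sum_congr rfl fun i hi => ?_
  rw [(Finset.mem_filter.mp hi).2]

theorem hsum_approx {d : ℕ} {D : ℝ} (hD : 1 ≤ D) {r : Site d → ℕ → Dir d}
    (hr : HasDiscrepancy d D r) (f : Site d → ℝ) (x : Site d) (m : ℕ) :
    |hsum r f x m - m / (2 * d) *
        ∑ i, ((f (x + unitVec d i) - f x) + (f (x - unitVec d i) - f x))| ≤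
      D * ∑ i, (|f (x + unitVec d i) - f x| + |f (x - unitVec d i) - f x|) := by
  have e1 : ∑ i, ((f (x + unitVec d i) - f x) + (f (x - unitVec d i) - f x)) =
      ∑ ε : Dir d, (f (x + dirVec d ε) - f x) := by
    rw [sum_dir (fun z => f (x + z) - f x)]
    simp [sub_eq_add_neg]
  have e2 : ∑ i, (|f (x + unitVec d i) - f x| + |f (x - unitVec d i) - f x|) =
      ∑ ε : Dir d, |f (x + dirVec d ε) - f x| := by
    rw [sum_dir (fun z => |f (x + z) - f x|)]
    simp [sub_eq_add_neg]
  rw [e1, e2, hsum_eq, Finset.mul_sum, ← Finset.sum_sub_distrib, Finset.mul_sum]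
  refine (Finset.abs_sum_le_sum_abs _ _).trans (Finset.sum_le_sum fun ε _ => ?_)
  rw [← sub_mul, abs_mul]
  gcongr
  rcases Nat.eq_zero_or_pos m with h | h
  · subst h; simp; linarith
  · exact hr x ε m h

theorem nsq_add_unit {d : ℕ} (x : Site d) (i : Fin d) :
    nsq (x + unitVec d i) - nsq x = 2 * x i + 1 := by
  unfold nsq
  rw [← Finset.sum_sub_distrib, Finset.sum_eq_single i]
  · simp [unitVec]; ring
  · intro j _ hj; simp [unitVec, hj]
  · simp

theorem nsq_sub_unit {d : ℕ} (x : Site d) (i : Fin d) :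
    nsq (x - unitVec d i) - nsq x = -2 * x i + 1 := by
  unfold nsq
  rw [← Finset.sum_sub_distrib, Finset.sum_eq_single i]
  · simp [unitVec]; ring
  · intro j _ hj; simp [unitVec, hj]
  · simp

theorem nsq_nonneg {d : ℕ} (x : Site d) : 0 ≤ nsq x := Finset.sum_nonneg fun _ _ => sq_nonneg _

/-- l1 norm -/
def l1 {d : ℕ} (x : Site d) : ℝ := ∑ i, |(x i : ℝ)|

theorem hsum_nsq {d : ℕ} (hd : 1 ≤ d) {D : ℝ} (hD : 1 ≤ D) {r : Site d → ℕ → Dir d}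
    (hr : HasDiscrepancy d D r) (x : Site d) (m : ℕ) :
    |hsum r nsq x m - m| ≤ D * (4 * l1 x + 2 * d) := by
  have hdpos : (0 : ℝ) < d := by exact_mod_cast hd
  have h := hsum_approx hD hr nsq x m
  simp only [nsq_add_unit, nsq_sub_unit] at h
  have e1 : ∑ i, (2 * (x i : ℝ) + 1 + (-2 * x i + 1)) = 2 * d := by
    have : ∀ i, (2 * (x i : ℝ) + 1 + (-2 * x i + 1)) = 2 := fun i => by ring
    simp only [this]; simp; ring
  rw [e1, div_mul_cancel₀ _ (by positivity)] at h
  refine h.trans ?_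
  gcongr
  calc ∑ i, (|2 * (x i : ℝ) + 1| + |-2 * (x i : ℝ) + 1|) ≤ ∑ i, (4 * |(x i : ℝ)| + 2) := by
        refine Finset.sum_le_sum fun i _ => ?_
        have h1 := abs_add_le (2 * (x i : ℝ)) 1
        have h2 := abs_add_le (-2 * (x i : ℝ)) 1
        rw [abs_mul] at h1 h2
        norm_num at h1 h2
        rw [neg_mul]
        linarith
    _ = _ := by rw [Finset.sum_add_distrib, ← Finset.mul_sum]; simp [l1]; ring

/-- Invariant of the walk in the region `A`. -/
theorem walk_invariant {d : ℕ} (r : Site d → ℕ → Dir d) (A : Finset (Site d)) (c : Site d → ℕ)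
    (hc : ∀ x, x ∉ A → c x = 0) (t : ℕ) (ht : ∀ s < t, (walkState r c s).1 ∈ A) :
    (∀ x, x ∉ A → (walkState r c t).2 x = 0) ∧
    (∑ x ∈ A, (walkState r c t).2 x = ∑ x ∈ A, c x + t) ∧
    ∀ f : Site d → ℝ, f (walkState r c t).1 + ∑ x ∈ A, hsum r f x (c x) =
      f 0 + ∑ x ∈ A, hsum r f x ((walkState r c t).2 x) := by
  induction t with
  | zero => exact ⟨hc, by simp [walkState], fun f => by simp [walkState]⟩
  | succ t ih =>
    obtain ⟨h1, h2, h3⟩ := ih (fun s hs => ht s (by omega))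
    have hp := ht t (by omega)
    have hs : walkState r c (t + 1) = rstep r (walkState r c t) := by
      simp only [walkState, Function.iterate_succ', Function.comp_apply]
    set s := walkState r c t
    rw [hs]
    refine ⟨fun x hx => ?_, ?_, fun f => ?_⟩
    · have : x ≠ s.1 := fun h => hx (h ▸ hp)
      simp [rstep, this, h1 x hx]
    · rw [← Finset.add_sum_erase _ _ hp] at h2 ⊢
      have : ∑ x ∈ A.erase s.1, (rstep r s).2 x = ∑ x ∈ A.erase s.1, s.2 x :=
        Finset.sum_congr rfl fun x hx => by simp [rstep, Finset.ne_of_mem_erase hx]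
      rw [this]
      simp only [rstep, Function.update_self]
      omega
    · have h4 := h3 f
      rw [← Finset.add_sum_erase A (fun x => hsum r f x (s.2 x)) hp] at h4
      rw [← Finset.add_sum_erase A (fun x => hsum r f x ((rstep r s).2 x)) hp]
      have : ∑ x ∈ A.erase s.1, hsum r f x ((rstep r s).2 x)
          = ∑ x ∈ A.erase s.1, hsum r f x (s.2 x) :=
        Finset.sum_congr rfl fun x hx => by simp [rstep, Finset.ne_of_mem_erase hx]
      rw [this]
      have e : hsum r f s.1 ((rstep r s).2 s.1) =
          hsum r f s.1 (s.2 s.1) + (f (rstep r s).1 - f s.1) := by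
        simp only [rstep, Function.update_self, hsum, Finset.sum_range_succ]
      rw [e]; linarith

theorem walk_exits {d : ℕ} (hd : 1 ≤ d) {D : ℝ} (hD : 1 ≤ D) {r : Site d → ℕ → Dir d}
    (hr : HasDiscrepancy d D r) (A : Finset (Site d)) (c : Site d → ℕ)
    (hc : ∀ x, x ∉ A → c x = 0) : ∃ t, (walkState r c t).1 ∉ A := by
  by_contra! hcon
  set M := ∑ x ∈ A, nsq x
  set E := ∑ x ∈ A, D * (4 * l1 x + 2 * d)
  set H := ∑ x ∈ A, hsum r nsq x (c x)
  obtain ⟨t, ht⟩ := exists_nat_gt (M + E + H)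
  obtain ⟨_, h2, h3⟩ := walk_invariant r A c hc t (fun s _ => hcon s)
  have h4 := h3 nsq
  have h5 : nsq (walkState r c t).1 ≤ M :=
    Finset.single_le_sum (f := nsq) (fun x _ => nsq_nonneg x) (hcon t)
  have h6 : ∑ x ∈ A, (((walkState r c t).2 x : ℕ) : ℝ) - E ≤
      ∑ x ∈ A, hsum r nsq x ((walkState r c t).2 x) := by
    rw [← Finset.sum_sub_distrib]
    refine Finset.sum_le_sum fun x _ => ?_
    have := (abs_le.mp (hsum_nsq hd hD hr x ((walkState r c t).2 x))).1
    linarith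
  have h7 : (t : ℝ) ≤ ∑ x ∈ A, (((walkState r c t).2 x : ℕ) : ℝ) := by
    rw [← Nat.cast_sum, h2]; push_cast
    have : (0 : ℝ) ≤ ∑ x ∈ A, (c x : ℝ) := Finset.sum_nonneg fun _ _ => Nat.cast_nonneg _
    linarith
  have h8 : 0 ≤ nsq (0 : Site d) := nsq_nonneg 0
  linarith

theorem agg_invariant {d : ℕ} (hd : 1 ≤ d) {D : ℝ} (hD : 1 ≤ D) {r : Site d → ℕ → Dir d}
    (hr : HasDiscrepancy d D r) (n : ℕ) :
    ∃ A : Finset (Site d), (aggState r n).1 = ↑A ∧ A.card = n + 1 ∧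
      (∀ x, x ∉ A → (aggState r n).2.1 x = 0) ∧
      ∀ f : Site d → ℝ, ∑ x ∈ A, f x =
        (n + 1) * f 0 + ∑ x ∈ A, hsum r f x ((aggState r n).2.1 x) := by
  induction n with
  | zero => exact ⟨{0}, by simp [aggState], by simp, by simp [aggState],
      fun f => by simp [aggState, hsum]⟩
  | succ n ih =>
    obtain ⟨A, hA, hcard, hc, hf⟩ := ih
    set c := (aggState r n).2.1 with hcdef
    have hex := walk_exits hd hD hr A c hc
    set τ := exitSteps r (aggState r n).1 c with hτ
    have hout : (walkState r c τ).1 ∉ A := by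
      have hne : {t | (walkState r c t).1 ∉ (aggState r n).1}.Nonempty := by
        obtain ⟨t, ht⟩ := hex
        exact ⟨t, by rw [Set.mem_ofPred_eq, hA]; simpa using ht⟩
      have := Nat.sInf_mem hne
      rw [Set.mem_ofPred_eq, hA] at this
      simpa [hτ, exitSteps, hA] using this
    have hin : ∀ s < τ, (walkState r c s).1 ∈ A := by
      intro s hs
      have := Nat.notMem_of_lt_sInf (show s < sInf {t | (walkState r c t).1 ∉ (aggState r n).1}
        from hs)
      rw [Set.mem_ofPred_eq, not_not, hA] at this
      simpa using this
    obtain ⟨h1, _, h3⟩ := walk_invariant r A c hc τ hin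
    have hs : aggState r (n + 1) = (insert (walkState r c τ).1 (aggState r n).1,
        (walkState r c τ).2, (aggState r n).2.2 + τ) := rfl
    refine ⟨insert (walkState r c τ).1 A, ?_, ?_, ?_, ?_⟩
    · rw [hs, hA]; simp
    · rw [Finset.card_insert_of_notMem hout, hcard]
    · intro x hx
      rw [hs]
      exact h1 x (fun h => hx (Finset.mem_insert_of_mem h))
    · intro f
      rw [hs, Finset.sum_insert hout, Finset.sum_insert hout]
      simp only
      rw [h1 _ hout, hf f]
      have := h3 f
      simp only [hsum, Finset.range_zero, Finset.sum_empty] at this ⊢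
      push_cast
      linarith

theorem ballVol_pos (d : ℕ) : 0 < ballVol d := by
  unfold ballVol
  exact ENNReal.toReal_pos (Metric.measure_ball_pos _ _ one_pos).ne' measure_ball_lt_top.ne

/-- Radius of the ball of volume `t`. -/
def rad (d : ℕ) (t : ℝ) : ℝ := (t / ballVol d) ^ ((1 : ℝ) / d)

theorem rad_nonneg (d : ℕ) {t : ℝ} (ht : 0 ≤ t) : 0 ≤ rad d t :=
  Real.rpow_nonneg (div_nonneg ht (ballVol_pos d).le) _

theorem rad_pow {d : ℕ} (hd : 1 ≤ d) {t : ℝ} (ht : 0 ≤ t) : rad d t ^ d = t / ballVol d := by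
  unfold rad
  rw [← Real.rpow_natCast, ← Real.rpow_mul (div_nonneg ht (ballVol_pos d).le)]
  have : (d : ℝ) ≠ 0 := by positivity
  rw [one_div_mul_cancel this, Real.rpow_one]

theorem abs_le_enorm {d : ℕ} (x : Site d) (i : Fin d) : |(x i : ℝ)| ≤ enorm x := by
  unfold enorm
  apply Real.abs_le_sqrt
  exact Finset.single_le_sum (f := fun i => ((x i : ℝ)) ^ 2) (fun _ _ => sq_nonneg _)
    (Finset.mem_univ i)

theorem enorm_nonneg' {d : ℕ} (x : Site d) : 0 ≤ enorm x := Real.sqrt_nonneg _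

theorem enorm_sq {d : ℕ} (x : Site d) : enorm x ^ 2 = nsq x := Real.sq_sqrt (nsq_nonneg x)

theorem lt_rad_of_mem {d : ℕ} (hd : 1 ≤ d) {n : ℕ} {x : Site d} (hx : x ∈ lball d n) :
    enorm x < rad d n := by
  have h : ballVol d * enorm x ^ d < n := hx
  refine lt_of_pow_lt_pow_left₀ d (rad_nonneg d (Nat.cast_nonneg n)) ?_
  rw [rad_pow hd (Nat.cast_nonneg n), lt_div_iff₀ (ballVol_pos d)]
  linarith

theorem lball_finite {d : ℕ} (hd : 1 ≤ d) (n : ℕ) : (lball d n).Finite := by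
  refine Set.Finite.subset (Set.finite_Icc (fun _ => -⌈rad d n⌉ : Site d) (fun _ => ⌈rad d n⌉)) ?_
  intro x hx
  have h := lt_rad_of_mem hd hx
  have h2 : ∀ i, |x i| ≤ ⌈rad d n⌉ := by
    intro i
    have : (|x i| : ℝ) ≤ (⌈rad d n⌉ : ℝ) :=
      ((abs_le_enorm x i).trans h.le).trans (Int.le_ceil _)
    exact_mod_cast this
  exact ⟨fun i => (abs_le.mp (h2 i)).1, fun i => (abs_le.mp (h2 i)).2⟩

theorem nmean_nsq {d : ℕ} (hd : 1 ≤ d) (x : Site d) : nmean d nsq x = nsq x + 1 := by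
  have hdpos : (0 : ℝ) < d := by exact_mod_cast hd
  unfold nmean
  have : ∀ i, nsq (x + unitVec d i) + nsq (x - unitVec d i) = 2 * nsq x + 2 := fun i => by
    have := nsq_add_unit x i
    have := nsq_sub_unit x i
    linarith
  simp only [this]
  simp
  field_simp

theorem exit_ball_le {d : ℕ} (hd : 1 ≤ d) {n : ℕ} (hn : 1 ≤ n) :
    exitFun d (lball d n) 0 ≤ (rad d n + 1) ^ 2 := by
  obtain ⟨B, hB⟩ : ∃ B : Finset (Site d), (B : Set (Site d)) = lball d n :=
    ⟨(lball_finite hd n).toFinset, by simp⟩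
  have hmem : ∀ x, x ∈ B ↔ x ∈ lball d n := fun x => by rw [← hB]; simp
  rw [← hB]
  obtain ⟨e1, e2⟩ := exitFun_spec hd B
  have h0 : (0 : Site d) ∈ B := by
    rw [hmem]
    show ballVol d * enorm (0 : Site d) ^ d < n
    have : enorm (0 : Site d) = 0 := by simp [enorm, nsq]
    rw [this, zero_pow (by omega), mul_zero]
    exact_mod_cast hn
  have key := min_principle hd B (fun y => ((rad d n + 1) ^ 2 - nsq y) - exitFun d B y)
    (fun y hy => by
      rw [nmean_sub, nmean_sub, nmean_const hd, nmean_nsq hd]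
      have := e2 y hy
      linarith)
    (fun y hy i => by
      have h1 := lt_rad_of_mem hd ((hmem y).mp hy)
      have h2 := abs_le_enorm y i
      have h3 := enorm_sq y
      have h5 := enorm_nonneg' y
      have h4 : (enorm y + 1) ^ 2 ≤ (rad d n + 1) ^ 2 := by gcongr
      have ha := abs_le.mp h2
      refine ⟨fun h => ?_, fun h => ?_⟩
      · have := nsq_add_unit y i
        simp only [e1 _ h]
        nlinarith
      · have := nsq_sub_unit y i
        simp only [e1 _ h]
        nlinarith) 0 h0
  have : nsq (0 : Site d) = 0 := by simp [nsq]
  simp only [this] at key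
  linarith

theorem phi_bdd {d : ℕ} (hd : 1 ≤ d) (n : ℕ) :
    BddAbove {t | ∃ A : Set (Site d), A.Finite ∧ A.ncard = n ∧
      t = ebar d A - exitFun d (lball d n) 0} := by
  set ρ := 2 * n + 1
  refine ⟨2 * ρ * (8 * d ^ 2 * n * ρ) - exitFun d (lball d n) 0, ?_⟩
  rintro _ ⟨A', hA, hcard, rfl⟩
  obtain ⟨A, rfl⟩ : ∃ A : Finset (Site d), (A : Set (Site d)) = A' := ⟨hA.toFinset, by simp⟩
  rw [Set.ncard_coe_finset] at hcard
  have hρ : 2 * A.card ≤ ρ ^ d := by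
    calc 2 * A.card ≤ ρ := by omega
      _ = ρ ^ 1 := by ring
      _ ≤ ρ ^ d := Nat.pow_le_pow_right (by omega) hd
  obtain ⟨e1, e2⟩ := exitFun_spec hd A
  have e0 := exitFun_nonneg hd A
  have g := grad1_bound hd A _ e0 e1 e2 ρ hρ (by omega)
  have s := sum_le_grad1 A _ e0 e1 ρ hρ (by omega)
  rw [hcard] at g
  gcongr
  apply ebar_le
  intro x
  have hx : exitFun d A x ≤ ∑ x ∈ A, exitFun d A x := by
    by_cases h : x ∈ A
    · exact Finset.single_le_sum (f := exitFun d A) (fun x _ => e0 x) h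
    · rw [e1 x h]; exact Finset.sum_nonneg fun x _ => e0 x
  refine (hx.trans s).trans ?_
  gcongr

theorem le_phi {d : ℕ} (hd : 1 ≤ d) (A : Finset (Site d)) :
    ebar d A - exitFun d (lball d A.card) 0 ≤ phi d A.card :=
  le_csSup (phi_bdd hd _) ⟨A, A.finite_toSet, Set.ncard_coe_finset A, rfl⟩

theorem psi_bound {d : ℕ} (hd : 1 ≤ d) {D : ℝ} (hD : 1 ≤ D) {r : Site d → ℕ → Dir d}
    (hr : HasDiscrepancy d D r) {n : ℕ} (hn : 1 ≤ n) (ρ : ℕ) (hρ : 2 * n ≤ ρ ^ d) (hρ1 : 1 ≤ ρ) :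
    ∃ A : Finset (Site d), aggRegion r n = ↑A ∧ A.card = n ∧
      ∑ x ∈ A, nsq x ≤ PhiSum d n + ∑ j ∈ Finset.Icc 1 n, (rad d j + 1) ^ 2
        + 16 * d ^ 2 * D * n * ρ + D * (4 * ∑ x ∈ A, l1 x + 2 * d * n) := by
  obtain ⟨A, hA, hcard, hc, hf⟩ := agg_invariant hd hD hr (n - 1)
  have hcard' : A.card = n := by omega
  refine ⟨A, hA, hcard', ?_⟩
  set c := (aggState r (n - 1)).2.1
  set T : ℝ := ∑ x ∈ A, (c x : ℝ)
  have hn' : ((n - 1 : ℕ) : ℝ) + 1 = n := by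
    have : n - 1 + 1 = n := by omega
    exact_mod_cast this
  simp only [hn'] at hf
  -- first identity
  have h1 : ∑ x ∈ A, nsq x ≤ T + D * (4 * ∑ x ∈ A, l1 x + 2 * d * n) := by
    have e := hf nsq
    have : nsq (0 : Site d) = 0 := by simp [nsq]
    rw [this, mul_zero, zero_add] at e
    rw [e]
    have : T + D * (4 * ∑ x ∈ A, l1 x + 2 * d * n) =
        ∑ x ∈ A, ((c x : ℝ) + D * (4 * l1 x + 2 * d)) := by
      rw [Finset.sum_add_distrib, ← Finset.mul_sum, Finset.sum_add_distrib, ← Finset.mul_sum]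
      have hT : T = ∑ x ∈ A, (c x : ℝ) := rfl
      rw [hT]
      simp only [Finset.sum_const, hcard', nsmul_eq_mul]; ring
    rw [this]
    refine Finset.sum_le_sum fun x _ => ?_
    have := (abs_le.mp (hsum_nsq hd hD hr x (c x))).2
    linarith
  -- second identity
  set u := exitFun d (A : Set (Site d)) with hu
  obtain ⟨e1, e2⟩ := exitFun_spec hd A
  have e0 := exitFun_nonneg hd A
  rw [← hu] at e0 e1 e2
  have hdpos : (0 : ℝ) < d := by exact_mod_cast hd
  have g := grad1_bound hd A u e0 e1 e2 ρ (by rw [hcard']; exact hρ) hρ1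
  have g2 := sum_abs_nbr_le A u e1
  have h2 : T ≤ ∑ x ∈ A, (u 0 - u x) + D * (2 * grad1 u) := by
    have e := hf u
    have b : ∑ x ∈ A, hsum r u x (c x) ≤ ∑ x ∈ A, (-(c x : ℝ) + D *
        ∑ i, (|u (x + unitVec d i) - u x| + |u (x - unitVec d i) - u x|)) := by
      refine Finset.sum_le_sum fun x hx => ?_
      have h := (abs_le.mp (hsum_approx hD hr u x (c x))).2
      have h3 : (c x : ℝ) / (2 * d) *
          ∑ i, ((u (x + unitVec d i) - u x) + (u (x - unitVec d i) - u x)) = - c x := by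
        have h4 : ∑ i, ((u (x + unitVec d i) - u x) + (u (x - unitVec d i) - u x)) =
            ∑ i, (u (x + unitVec d i) + u (x - unitVec d i)) - 2 * d * u x := by
          have : ∀ i, ((u (x + unitVec d i) - u x) + (u (x - unitVec d i) - u x)) =
            (u (x + unitVec d i) + u (x - unitVec d i)) - 2 * u x := fun i => by ring
          simp only [this, Finset.sum_sub_distrib]; simp; ring
        have h5 := e2 x hx
        unfold nmean at h5
        rw [h4]
        have : (c x : ℝ) / (2 * d) * (∑ i, (u (x + unitVec d i) + u (x - unitVec d i))
            - 2 * d * u x) = c x * (1 / (2 * d) * ∑ i, (u (x + unitVec d i) + u (x - unitVec d i))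
            - u x) := by field_simp
        rw [this, h5]; ring
      linarith
    rw [Finset.sum_add_distrib, Finset.sum_neg_distrib, ← Finset.mul_sum] at b
    have b2 := mul_le_mul_of_nonneg_left g2 (by linarith : 0 ≤ D)
    rw [Finset.sum_sub_distrib]
    simp only [Finset.sum_const, hcard', nsmul_eq_mul]
    have : T = ∑ x ∈ A, (c x : ℝ) := rfl
    linarith
  -- chain bound
  have h3 : ∑ x ∈ A, (u 0 - u x) ≤ PhiSum d n + ∑ j ∈ Finset.Icc 1 n, (rad d j + 1) ^ 2 := by
    set K : ℕ → ℝ := fun j => if j = 0 then 0 else phi d j + exitFun d (lball d j) 0 with hKdef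
    have hK : ∀ S : Finset (Site d), exitFun d S 0 ≤ K S.card := by
      intro S
      by_cases hS : S.card = 0
      · simp only [hKdef, hS, if_true]
        rw [Finset.card_eq_zero] at hS
        exact ((exitFun_spec hd S).1 0 (by simp [hS])).le
      · simp only [hKdef, if_neg hS]
        have := le_phi hd S
        have := exitFun_le_ebar hd S 0
        linarith
    have hKn : 0 ≤ K n := (e0 0).trans (hcard' ▸ hK A)
    have ch := chain_bound hd u K hK n A hcard' e2 (fun x hx y _ => by rw [e1 x hx]; exact e0 y)
    have : ∑ j ∈ Finset.range n, K j ≤ ∑ j ∈ Finset.Icc 1 n, K j := by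
      have e : ∑ j ∈ Finset.range (n + 1), K j = K 0 + ∑ j ∈ Finset.Icc 1 n, K j := by
        rw [Finset.range_eq_Ico, Finset.sum_eq_sum_Ico_succ_bot (by omega)]
        rfl
      rw [Finset.sum_range_succ] at e
      have : K 0 = 0 := by simp [hKdef]
      linarith
    refine (ch.trans this).trans ?_
    unfold PhiSum
    rw [← Finset.sum_add_distrib]
    refine Finset.sum_le_sum fun j hj => ?_
    have hj1 : 1 ≤ j := (Finset.mem_Icc.mp hj).1
    simp only [hKdef, if_neg (by omega : j ≠ 0)]
    have := exit_ball_le hd hj1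
    linarith
  have h4 : D * (2 * grad1 u) ≤ 16 * d ^ 2 * D * n * ρ := by
    rw [hcard'] at g
    calc D * (2 * grad1 u) ≤ D * (2 * (8 * d ^ 2 * n * ρ)) := by gcongr
      _ = _ := by ring
  linarith

/-- Half-open unit cube. -/
def hcube {d : ℕ} (x : Site d) : Set (EuclideanSpace ℝ (Fin d)) :=
  {z | ∀ i, (x i : ℝ) - 1 / 2 ≤ z i ∧ z i < (x i : ℝ) + 1 / 2}

/-- Closed unit cube. -/
def ccube {d : ℕ} (x : Site d) : Set (EuclideanSpace ℝ (Fin d)) :=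
  {z | ∀ i, |z i - (x i : ℝ)| ≤ 1 / 2}

theorem hcube_meas {d : ℕ} (x : Site d) : MeasurableSet (hcube x) ∧ volume (hcube x) = 1 := by
  have h : hcube x = (@WithLp.ofLp 2 (Fin d → ℝ)) ⁻¹'
      (Set.univ.pi fun i => Set.Ico ((x i : ℝ) - 1 / 2) ((x i : ℝ) + 1 / 2)) := by
    ext z; simp [hcube]
  have hm : MeasurableSet (Set.univ.pi fun i : Fin d =>
      Set.Ico ((x i : ℝ) - 1 / 2) ((x i : ℝ) + 1 / 2)) :=
    MeasurableSet.univ_pi fun i => measurableSet_Ico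
  have hp := PiLp.volume_preserving_ofLp (Fin d)
  refine ⟨h ▸ hp.measurable hm, ?_⟩
  rw [h, hp.measure_preimage hm.nullMeasurableSet, Real.volume_pi_Ico]
  apply Finset.prod_eq_one
  intro i _
  have : (x i : ℝ) + 1 / 2 - (x i - 1 / 2) = 1 := by ring
  rw [this]; simp

theorem ccube_meas {d : ℕ} (x : Site d) : volume (ccube x) = 1 := by
  have h : ccube x = (@WithLp.ofLp 2 (Fin d → ℝ)) ⁻¹'
      (Set.univ.pi fun i => Set.Icc ((x i : ℝ) - 1 / 2) ((x i : ℝ) + 1 / 2)) := by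
    ext z
    simp only [ccube, Set.mem_preimage, Set.mem_pi, Set.mem_univ, true_imp_iff, Set.mem_Icc]
    refine forall_congr' fun i => ?_
    rw [abs_le]
    constructor <;> rintro ⟨a, b⟩ <;> constructor <;> linarith
  have hm : MeasurableSet (Set.univ.pi fun i : Fin d =>
      Set.Icc ((x i : ℝ) - 1 / 2) ((x i : ℝ) + 1 / 2)) :=
    MeasurableSet.univ_pi fun i => measurableSet_Icc
  have hp := PiLp.volume_preserving_ofLp (Fin d)
  rw [h, hp.measure_preimage hm.nullMeasurableSet, volume_pi_pi]
  apply Finset.prod_eq_one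
  intro i _
  have : (x i : ℝ) + 1 / 2 - (x i - 1 / 2) = 1 := by ring
  rw [Real.volume_Icc, this]; simp

theorem hcube_sub {d : ℕ} (x : Site d) : hcube x ⊆ ccube x := by
  intro z hz i
  have := hz i
  rw [abs_le]; constructor <;> linarith

theorem hcube_disj {d : ℕ} (A : Set (Site d)) :
    A.Pairwise (Function.onFun Disjoint (fun x => hcube x)) := by
  intro x _ y _ hxy
  rw [Function.onFun, Set.disjoint_left]
  intro z hz hz'
  apply hxy
  funext i
  have h1 := hz i
  have h2 := hz' i
  have a : (x i : ℝ) < y i + 1 := by linarith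
  have b : (y i : ℝ) < x i + 1 := by linarith
  have a' : x i < y i + 1 := by exact_mod_cast a
  have b' : y i < x i + 1 := by exact_mod_cast b
  omega

/-- Union of half-open cubes. -/
def hbox {d : ℕ} (A : Finset (Site d)) : Set (EuclideanSpace ℝ (Fin d)) := ⋃ x ∈ A, hcube x

theorem hbox_meas {d : ℕ} (A : Finset (Site d)) : MeasurableSet (hbox A) :=
  A.measurableSet_biUnion fun x _ => (hcube_meas x).1

theorem hbox_vol {d : ℕ} (A : Finset (Site d)) : volume (hbox A) = A.card := by
  unfold hbox
  rw [measure_biUnion_finset (hcube_disj _) (fun x _ => (hcube_meas x).1)]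
  simp [(hcube_meas _).2]

theorem box_eq {d : ℕ} (A : Finset (Site d)) : box d A = ⋃ x ∈ A, ccube x := by
  ext z; simp [box, ccube]

theorem box_diff {d : ℕ} (A : Finset (Site d)) : volume (box d A \ hbox A) = 0 := by
  have hsub : hbox A ⊆ box d A := by
    rw [box_eq]; exact Set.iUnion₂_mono fun x _ => hcube_sub x
  rw [measure_sdiff hsub (hbox_meas A).nullMeasurableSet (by rw [hbox_vol]; simp), hbox_vol,
    tsub_eq_zero_iff_le, box_eq]
  refine (measure_biUnion_finset_le _ _).trans ?_
  simp [ccube_meas]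

theorem symm_box_le {d : ℕ} (A : Finset (Site d)) (B : Set (EuclideanSpace ℝ (Fin d))) :
    volume (box d A ∆ B) ≤ volume (hbox A ∆ B) := by
  have hsub : hbox A ⊆ box d A := by
    rw [box_eq]; exact Set.iUnion₂_mono fun x _ => hcube_sub x
  have : box d A ∆ B ⊆ (hbox A ∆ B) ∪ (box d A \ hbox A) := by
    intro z
    simp only [Set.mem_symmDiff, Set.mem_union, Set.mem_sdiff]
    have := @hsub z
    tauto
  calc _ ≤ volume ((hbox A ∆ B) ∪ (box d A \ hbox A)) := measure_mono this
    _ ≤ _ := measure_union_le _ _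
    _ = _ := by rw [box_diff, add_zero]

theorem hcube_norm {d : ℕ} (x : Site d) (z : EuclideanSpace ℝ (Fin d)) (hz : z ∈ hcube x) :
    ‖z‖ ^ 2 ≤ nsq x + l1 x + d / 4 := by
  rw [EuclideanSpace.norm_sq_eq]
  have : nsq x + l1 x + d / 4 = ∑ i, ((x i : ℝ) ^ 2 + |(x i : ℝ)| + 1 / 4) := by
    simp only [Finset.sum_add_distrib, nsq, l1]; simp; ring
  rw [this]
  refine Finset.sum_le_sum fun i _ => ?_
  have h := abs_le.mp (hcube_sub x hz i)
  rw [Real.norm_eq_abs, sq_abs]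
  have h1 := le_abs_self (x i : ℝ)
  have h2 := neg_abs_le (x i : ℝ)
  set y := z i - x i
  have hy : z i = x i + y := by simp [y]
  rw [hy]
  have h3 : 2 * (x i : ℝ) * y ≤ |(x i : ℝ)| := by
    calc 2 * (x i : ℝ) * y ≤ |2 * (x i : ℝ) * y| := le_abs_self _
      _ = |(x i : ℝ)| * (2 * |y|) := by rw [abs_mul, abs_mul]; simp; ring
      _ ≤ |(x i : ℝ)| * 1 := by
        gcongr
        have := abs_le.mpr h
        linarith
      _ = _ := by ring
  nlinarith

theorem hcube_integrable {d : ℕ} (x : Site d) :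
    IntegrableOn (fun z : EuclideanSpace ℝ (Fin d) => ‖z‖ ^ 2) (hcube x) := by
  refine Measure.integrableOn_of_bounded (M := nsq x + l1 x + d / 4)
    (by rw [(hcube_meas x).2]; simp) (by fun_prop) ?_
  filter_upwards [ae_restrict_mem (hcube_meas x).1] with z hz
  rw [Real.norm_eq_abs, abs_of_nonneg (by positivity)]
  exact hcube_norm x z hz

theorem hbox_integrable {d : ℕ} (A : Finset (Site d)) :
    IntegrableOn (fun z : EuclideanSpace ℝ (Fin d) => ‖z‖ ^ 2) (hbox A) := by
  unfold hbox
  rw [integrableOn_finset_iUnion]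
  exact fun x _ => hcube_integrable x

theorem hbox_integral {d : ℕ} (A : Finset (Site d)) :
    ∫ z in hbox A, ‖z‖ ^ 2 ≤ ∑ x ∈ A, nsq x + ∑ x ∈ A, l1 x + A.card * (d / 4) := by
  unfold hbox
  rw [integral_biUnion_finset _ (fun x _ => (hcube_meas x).1) (hcube_disj _)
    (fun x _ => hcube_integrable x)]
  have : ∑ x ∈ A, nsq x + ∑ x ∈ A, l1 x + A.card * ((d : ℝ) / 4) =
      ∑ x ∈ A, (nsq x + l1 x + d / 4) := by
    simp [Finset.sum_add_distrib]
  rw [this]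
  refine Finset.sum_le_sum fun x _ => ?_
  have h := setIntegral_mono_on (hcube_integrable x)
    (integrableOn_const (by rw [(hcube_meas x).2]; simp)) (hcube_meas x).1
    (fun z hz => hcube_norm x z hz)
  refine h.trans ?_
  rw [setIntegral_const, measureReal_def, (hcube_meas x).2]; simp

theorem ball_vol_real {d : ℕ} {ρ : ℝ} (hρ : 0 ≤ ρ) :
    volume.real (Metric.closedBall (0 : EuclideanSpace ℝ (Fin d)) ρ) = ρ ^ d * ballVol d := by
  rw [Measure.addHaar_real_closedBall _ _ hρ]
  simp [ballVol, measureReal_def]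

theorem ball_integral {d : ℕ} (hd : 1 ≤ d) {R : ℝ} (hR : 0 ≤ R) :
    ∫ z in Metric.closedBall (0 : EuclideanSpace ℝ (Fin d)) R, ‖z‖ ^ 2 =
      d * ballVol d * (R ^ (d + 2) / (d + 2)) := by
  have : Nontrivial (EuclideanSpace ℝ (Fin d)) := by
    have : Nonempty (Fin d) := ⟨⟨0, hd⟩⟩
    infer_instance
  rw [← integral_indicator Metric.isClosed_closedBall.measurableSet]
  have e : (Metric.closedBall (0 : EuclideanSpace ℝ (Fin d)) R).indicator (fun z => ‖z‖ ^ 2) =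
      fun z => (Set.Iic R).indicator (fun y => y ^ 2) ‖z‖ := by
    funext z
    simp [Set.indicator]
  rw [e, integral_fun_norm_addHaar]
  have : ∫ y in Set.Ioi (0 : ℝ), y ^ (Module.finrank ℝ (EuclideanSpace ℝ (Fin d)) - 1) •
      (Set.Iic R).indicator (fun y => y ^ 2) y = R ^ (d + 2) / (d + 2) := by
    have e2 : ∀ y : ℝ, y ^ (Module.finrank ℝ (EuclideanSpace ℝ (Fin d)) - 1) •
      (Set.Iic R).indicator (fun y => y ^ 2) y = (Set.Iic R).indicator (fun y => y ^ (d + 1)) y := by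
      intro y
      have : d + 1 = d - 1 + 2 := by omega
      simp only [Set.indicator, finrank_euclideanSpace, Fintype.card_fin, smul_eq_mul]
      split_ifs
      · rw [this, pow_add]
      · simp
    simp only [e2]
    rw [setIntegral_indicator measurableSet_Iic, Set.Ioi_inter_Iic,
      ← intervalIntegral.integral_of_le hR, integral_pow]
    simp; ring
  rw [this]
  simp [ballVol, measureReal_def]; ring

theorem excess {d : ℕ} (hd : 1 ≤ d) {n : ℕ} (hn : 1 ≤ n) (E : Set (EuclideanSpace ℝ (Fin d)))
    (hE : MeasurableSet E) (hv : volume E = n)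
    (hint : IntegrableOn (fun z : EuclideanSpace ℝ (Fin d) => ‖z‖ ^ 2) E) {R : ℝ} (hR : 0 ≤ R)
    (hRn : R ^ d * ballVol d = n) :
    volume.real (E ∆ Metric.closedBall 0 R) ^ 2 * R ^ 2 ≤ 16 * d * n *
      ((∫ z in E, ‖z‖ ^ 2) - ∫ z in Metric.closedBall (0 : EuclideanSpace ℝ (Fin d)) R, ‖z‖ ^ 2) := by
  set B := Metric.closedBall (0 : EuclideanSpace ℝ (Fin d)) R with hB
  have hBm : MeasurableSet B := Metric.isClosed_closedBall.measurableSet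
  have hBv : volume.real B = n := by rw [ball_vol_real hR, hRn]
  have hEv : volume.real E = n := by rw [measureReal_def, hv]; simp
  have hBfin : volume B ≠ ⊤ := measure_closedBall_lt_top.ne
  have hEfin : volume E ≠ ⊤ := by rw [hv]; simp
  have hnpos : (0 : ℝ) < n := by exact_mod_cast hn
  have hdpos : (1 : ℝ) ≤ d := by exact_mod_cast hd
  have hintB : IntegrableOn (fun z : EuclideanSpace ℝ (Fin d) => ‖z‖ ^ 2) B := by
    apply ContinuousOn.integrableOn_compact (isCompact_closedBall _ _)
    fun_prop
  set g : EuclideanSpace ℝ (Fin d) → ℝ := fun z => ‖z‖ ^ 2 - R ^ 2 with hg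
  have gE : IntegrableOn g E := hint.sub (integrableOn_const hEfin)
  have gB : IntegrableOn g B := hintB.sub (integrableOn_const hBfin)
  have iE : ∫ z in E, g z = (∫ z in E, ‖z‖ ^ 2) - n * R ^ 2 := by
    rw [integral_sub hint (integrableOn_const hEfin), setIntegral_const, hEv, smul_eq_mul]
  have iB : ∫ z in B, g z = (∫ z in B, ‖z‖ ^ 2) - n * R ^ 2 := by
    rw [integral_sub hintB (integrableOn_const hBfin), setIntegral_const, hBv, smul_eq_mul]
  have sE := integral_inter_add_sdiff hBm gE
  have sB := integral_inter_add_sdiff hE gB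
  rw [Set.inter_comm] at sB
  have pos1 : 0 ≤ ∫ z in E \ B, g z := by
    apply setIntegral_nonneg (hE.diff hBm)
    intro z hz
    have : R < ‖z‖ := by
      have := hz.2
      simpa [hB] using this
    simp only [hg]; nlinarith
  set m := volume.real (B \ E) with hm
  have hm0 : 0 ≤ m := measureReal_nonneg
  have hmn : m ≤ n := by
    rw [← hBv]; exact measureReal_mono Set.sdiff_subset hBfin
  set δ := m / (2 * d * n) with hδ
  have hδ0 : 0 ≤ δ := by positivity
  have hδ1 : δ ≤ 1 := by
    rw [hδ, div_le_one (by positivity)]; nlinarith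
  set ρ := R * (1 - δ) with hρ
  have hρ0 : 0 ≤ ρ := mul_nonneg hR (by linarith)
  have hρR : ρ ≤ R := by rw [hρ]; nlinarith
  set B' := Metric.closedBall (0 : EuclideanSpace ℝ (Fin d)) ρ with hB'
  have hBm' : MeasurableSet B' := Metric.isClosed_closedBall.measurableSet
  have hBv' : volume.real B' = ρ ^ d * ballVol d := ball_vol_real hρ0
  have hsub : B' ⊆ B := Metric.closedBall_subset_closedBall hρR
  have hshell : volume.real (B \ B') ≤ m / 2 := by
    rw [measureReal_sdiff hsub hBm', hBv, hBv', hρ, mul_pow]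
    have hb : 1 - d * δ ≤ (1 - δ) ^ d := by
      have := one_add_mul_le_pow (a := -δ) (by linarith) d
      simpa [sub_eq_add_neg] using this
    have : n * (1 - d * δ) ≤ n * (1 - δ) ^ d := by gcongr
    have e : R ^ d * (1 - δ) ^ d * ballVol d = n * (1 - δ) ^ d := by rw [← hRn]; ring
    rw [e]
    have e2 : n * (d * δ) = m / 2 := by rw [hδ]; field_simp
    linarith
  have hinner : m / 2 ≤ volume.real ((B \ E) ∩ B') := by
    have h1 : B \ E ⊆ ((B \ E) ∩ B') ∪ (B \ B') := by
      intro z hz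
      by_cases h : z ∈ B'
      · left; exact ⟨hz, h⟩
      · right; exact ⟨hz.1, h⟩
    have h2 : m ≤ volume.real (((B \ E) ∩ B') ∪ (B \ B')) :=
      measureReal_mono h1 (measure_union_ne_top
        (measure_ne_top_of_subset (fun z hz => hz.1.1) hBfin)
        (measure_ne_top_of_subset Set.sdiff_subset hBfin))
    have h3 := measureReal_union_le (μ := volume) ((B \ E) ∩ B') (B \ B')
    linarith
  have neg1 : ∫ z in B \ E, g z ≤ -(R ^ 2 * δ * (m / 2)) := by
    have gBE : IntegrableOn g (B \ E) := gB.mono_set Set.sdiff_subset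
    have s := integral_inter_add_sdiff hBm' gBE
    have a : ∫ z in (B \ E) \ B', g z ≤ 0 := by
      apply setIntegral_nonpos ((hBm.diff hE).diff hBm')
      intro z hz
      have : ‖z‖ ≤ R := by
        have := hz.1.1
        simpa [hB] using this
      have := norm_nonneg z
      simp only [hg]; nlinarith
    have b : ∫ z in (B \ E) ∩ B', g z ≤ ∫ z in (B \ E) ∩ B', -(R ^ 2 * δ) := by
      apply setIntegral_mono_on (gBE.mono_set Set.inter_subset_left)
        (integrableOn_const (measure_ne_top_of_subset (fun z hz => hz.1.1) hBfin))
        ((hBm.diff hE).inter hBm')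
      intro z hz
      have h1 : ‖z‖ ≤ ρ := by
        have := hz.2
        simpa [hB'] using this
      have h2 : ‖z‖ ^ 2 ≤ ρ ^ 2 := by gcongr
      have h3 : ρ ^ 2 = R ^ 2 * (1 - δ) ^ 2 := by rw [hρ]; ring
      have h4 : (1 - δ) ^ 2 ≤ 1 - δ := by nlinarith
      have h5 : R ^ 2 * (1 - δ) ^ 2 ≤ R ^ 2 * (1 - δ) := by gcongr
      simp only [hg]; linarith
    rw [setIntegral_const, smul_eq_mul] at b
    have c : R ^ 2 * δ * (m / 2) ≤ R ^ 2 * δ * volume.real ((B \ E) ∩ B') := by gcongr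
    linarith
  have hsym : volume.real (E ∆ B) ≤ 2 * m := by
    have h1 : volume.real (E ∆ B) ≤ volume.real (E \ B) + volume.real (B \ E) :=
      measureReal_union_le _ _
    have h2 := measureReal_inter_add_sdiff (μ := volume) (s := E) hBm hEfin
    have h3 := measureReal_inter_add_sdiff (μ := volume) (s := B) hE hBfin
    rw [Set.inter_comm] at h3
    linarith
  have hmain : R ^ 2 * δ * (m / 2) ≤ (∫ z in E, ‖z‖ ^ 2) - ∫ z in B, ‖z‖ ^ 2 := by linarith
  calc volume.real (E ∆ B) ^ 2 * R ^ 2 ≤ (2 * m) ^ 2 * R ^ 2 := by gcongr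
    _ = 16 * d * n * (R ^ 2 * δ * (m / 2)) := by rw [hδ]; field_simp; ring
    _ ≤ _ := by gcongr


theorem pow_ineq (d : ℕ) {a b : ℝ} (ha : 0 ≤ a) (hab : a ≤ b) :
    0 ≤ d * b ^ (d + 2) - (d + 2) * a ^ 2 * b ^ d + 2 * a ^ (d + 2) := by
  induction d with
  | zero => simp
  | succ k ih =>
    have hb : 0 ≤ b := ha.trans hab
    have h1 : a ^ (k + 1) ≤ b ^ (k + 1) := pow_le_pow_left₀ ha hab _
    have h0 : 0 ≤ a ^ (k + 1) := by positivity
    have h2 : a ^ (k + 1) * (2 * a) ≤ b ^ (k + 1) * (b + a) :=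
      mul_le_mul h1 (by linarith) (by linarith) (h0.trans h1)
    have h3 : 0 ≤ (b - a) * (b ^ (k + 1) * (b + a) - a ^ (k + 1) * (2 * a)) :=
      mul_nonneg (by linarith) (by linarith)
    have h4 := mul_nonneg hb ih
    have e : ((k + 1 : ℕ) : ℝ) * b ^ (k + 1 + 2) - (((k + 1 : ℕ) : ℝ) + 2) * a ^ 2 * b ^ (k + 1)
        + 2 * a ^ (k + 1 + 2) =
        b * (k * b ^ (k + 2) - (k + 2) * a ^ 2 * b ^ k + 2 * a ^ (k + 2)) +
        (b - a) * (b ^ (k + 1) * (b + a) - a ^ (k + 1) * (2 * a)) := by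
      push_cast; ring
    rw [e]; linarith

theorem rad_mono {d : ℕ} {t u : ℝ} (ht : 0 ≤ t) (htu : t ≤ u) : rad d t ≤ rad d u := by
  unfold rad
  have := ballVol_pos d
  apply Real.rpow_le_rpow (by positivity) (by gcongr) (by positivity)

theorem sum_rad_sq {d : ℕ} (hd : 1 ≤ d) (n : ℕ) :
    ∑ j ∈ Finset.Icc 1 n, rad d j ^ 2 ≤ n * rad d n ^ 2 * (d / (d + 2)) + rad d n ^ 2 := by
  induction n with
  | zero => simp; positivity
  | succ k ih =>
    rw [Finset.sum_Icc_succ_top (by omega)]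
    have hw := ballVol_pos d
    have ha := rad_nonneg d (t := (k : ℝ)) (by positivity)
    have hab : rad d (k : ℝ) ≤ rad d ((k + 1 : ℕ) : ℝ) := rad_mono (by positivity) (by push_cast; linarith)
    have e1 := rad_pow hd (t := (k : ℝ)) (by positivity)
    have e2 := rad_pow hd (t := ((k + 1 : ℕ) : ℝ)) (by positivity)
    have hp := pow_ineq d ha hab
    set a := rad d (k : ℝ)
    set b := rad d ((k + 1 : ℕ) : ℝ)
    have e3 : d * b ^ (d + 2) - (d + 2) * a ^ 2 * b ^ d + 2 * a ^ (d + 2)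
        = (d * (b ^ 2 * ((k + 1 : ℕ) : ℝ)) - (d + 2) * a ^ 2 * ((k + 1 : ℕ) : ℝ)
          + 2 * (a ^ 2 * k)) / ballVol d := by
      rw [pow_add, pow_add, e1, e2]; field_simp
    rw [e3] at hp
    have hp2 : 0 ≤ d * (b ^ 2 * ((k + 1 : ℕ) : ℝ)) - (d + 2) * a ^ 2 * ((k + 1 : ℕ) : ℝ)
          + 2 * (a ^ 2 * k) := by
      by_contra h
      push Not at h
      exact absurd hp (not_le.mpr (div_neg_of_neg_of_pos h hw))
    have h5 : k * a ^ 2 * (d / (d + 2)) + a ^ 2 ≤ ((k + 1 : ℕ) : ℝ) * b ^ 2 * (d / (d + 2)) := by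
      have : (0 : ℝ) < d + 2 := by positivity
      rw [← sub_nonneg]
      have e : ((k + 1 : ℕ) : ℝ) * b ^ 2 * (d / (d + 2)) - (k * a ^ 2 * (d / (d + 2)) + a ^ 2)
        = (d * (b ^ 2 * ((k + 1 : ℕ) : ℝ)) - (d + 2) * a ^ 2 * ((k + 1 : ℕ) : ℝ)
          + 2 * (a ^ 2 * k)) / (d + 2) := by
        push_cast; field_simp; ring
      rw [e]; positivity
    linarith

theorem sum_rad_one_sq {d : ℕ} (hd : 1 ≤ d) (n : ℕ) :
    ∑ j ∈ Finset.Icc 1 n, (rad d j + 1) ^ 2 ≤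
      n * rad d n ^ 2 * (d / (d + 2)) + rad d n ^ 2 + n * (2 * rad d n + 1) := by
  have h : ∀ j ∈ Finset.Icc 1 n, (rad d j + 1) ^ 2 ≤ rad d j ^ 2 + (2 * rad d n + 1) := by
    intro j hj
    have hj := (Finset.mem_Icc.mp hj).2
    have : rad d (j : ℝ) ≤ rad d n := rad_mono (by positivity) (by exact_mod_cast hj)
    nlinarith
  refine (Finset.sum_le_sum h).trans ?_
  rw [Finset.sum_add_distrib]
  have := sum_rad_sq hd n
  simp
  linarith

theorem l1_sq {d : ℕ} (A : Finset (Site d)) :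
    (∑ x ∈ A, l1 x) ^ 2 ≤ A.card * (d * ∑ x ∈ A, nsq x) := by
  have h2 : ∀ x : Site d, l1 x ^ 2 ≤ d * nsq x := by
    intro x
    unfold l1 nsq
    have := sq_sum_le_card_mul_sum_sq (s := (Finset.univ : Finset (Fin d))) (f := fun i => |(x i : ℝ)|)
    simpa using this
  have h0 := sq_sum_le_card_mul_sum_sq (s := A) (f := fun x => l1 x)
  refine h0.trans ?_
  have e : (d : ℝ) * ∑ x ∈ A, nsq x = ∑ x ∈ A, d * nsq x := Finset.mul_sum ..
  rw [e]
  have h1 : ∑ x ∈ A, l1 x ^ 2 ≤ ∑ x ∈ A, d * nsq x := Finset.sum_le_sum fun x _ => h2 x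
  exact mul_le_mul_of_nonneg_left h1 (Nat.cast_nonneg _)

set_option maxHeartbeats 1000000 in
/-- The final elementary estimate. -/
theorem final_real {d β : ℝ} (hd : 1 ≤ d) (hβ : 0 < β) : ∃ C : ℝ, 0 ≤ C ∧
    ∀ n s D P Φ ψ I V : ℝ, 1 ≤ n → 1 ≤ s → s ≤ n → 1 ≤ D → 0 ≤ ψ → 0 ≤ P → 0 ≤ V → V ≤ 2 * n →
      P ^ 2 ≤ n * (d * ψ) → I ≤ n * (β * s) ^ 2 →
      ψ ≤ Φ + (I + (β * s) ^ 2 + n * (2 * (β * s) + 1)) + 16 * d ^ 2 * D * n * (3 * s)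
        + D * (4 * P + 2 * d * n) →
      V ^ 2 * (β * s) ^ 2 ≤ 16 * d * n * (ψ + P + n * (d / 4) - I) →
      V / n ≤ C * (√Φ / (√n * s) + √D / √s) := by
  obtain ⟨K, hK⟩ : ∃ K : ℝ, K = 2 * (2 + 2 * β ^ 2 + 2 * β + 48 * d ^ 2 + 10 * d) := ⟨_, rfl⟩
  obtain ⟨L, hL⟩ : ∃ L : ℝ, L = d * K := ⟨_, rfl⟩
  obtain ⟨M, hM⟩ : ∃ M : ℝ, M = 2 * β + 1 + β ^ 2 + 48 * d ^ 2 + 5 * L + 3 * d := ⟨_, rfl⟩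
  obtain ⟨Q, hQ⟩ : ∃ Q : ℝ, Q = 16 * d / β ^ 2 * (1 + M) := ⟨_, rfl⟩
  have hK1 : 1 ≤ K := by rw [hK]; nlinarith [sq_nonneg β, sq_nonneg d]
  have hL1 : 1 ≤ L := by rw [hL]; nlinarith
  have hM0 : 0 ≤ M := by rw [hM]; positivity
  have hQ0 : 0 ≤ Q := by rw [hQ]; positivity
  refine ⟨2 + √Q, by positivity, ?_⟩
  intro n s D P Φ ψ I V hn hs hsn hD hψ0 hP hV hV2 hPψ hI hψ hVe
  have hn0 : 0 < n := by linarith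
  have hs0 : 0 < s := by linarith
  have hD0 : 0 < D := by linarith
  have ha0 : 0 ≤ √Φ / (√n * s) := by positivity
  have hb0 : 0 ≤ √D / √s := by positivity
  have hx2 : V / n ≤ 2 := by rw [div_le_iff₀ hn0]; exact hV2
  by_cases h1 : n * s ^ 2 ≤ Φ
  · have : 1 ≤ √Φ / (√n * s) := by
      rw [le_div_iff₀ (by positivity), one_mul]
      apply Real.le_sqrt_of_sq_le
      rw [mul_pow, Real.sq_sqrt hn0.le]; exact h1
    nlinarith [Real.sqrt_nonneg Q]
  by_cases h2 : s ≤ D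
  · have : 1 ≤ √D / √s := by
      rw [le_div_iff₀ (by positivity), one_mul]
      exact Real.sqrt_le_sqrt h2
    nlinarith [Real.sqrt_nonneg Q]
  push Not at h1 h2
  have hns : 0 < n * s := by positivity
  have hss : s ≤ s ^ 2 := by nlinarith
  have h1s : 1 ≤ s ^ 2 := by nlinarith
  -- first bound on ψ
  have hψ1 : ψ ≤ K * (n * s ^ 2) := by
    have t0 : 4 * D * P ≤ 4 * s * P := by gcongr
    have t1 : 4 * s * P ≤ ψ / 2 + 8 * d * (n * s ^ 2) := by
      apply abs_le_of_sq_le_sq' _ (by positivity) |>.2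
      have : (4 * s * P) ^ 2 ≤ 16 * s ^ 2 * (n * (d * ψ)) := by
        calc (4 * s * P) ^ 2 = 16 * s ^ 2 * P ^ 2 := by ring
          _ ≤ _ := by gcongr
      nlinarith [sq_nonneg (ψ / 2 - 8 * d * (n * s ^ 2))]
    have t2 : (β * s) ^ 2 ≤ β ^ 2 * (n * s ^ 2) := by
      rw [mul_pow]; gcongr; nlinarith
    have t3 : n * (2 * (β * s) + 1) ≤ (2 * β + 1) * (n * s ^ 2) := by
      have : 2 * (β * s) + 1 ≤ (2 * β + 1) * s ^ 2 := by nlinarith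
      nlinarith
    have t4 : 16 * d ^ 2 * D * n * (3 * s) ≤ 48 * d ^ 2 * (n * s ^ 2) := by
      calc 16 * d ^ 2 * D * n * (3 * s) ≤ 16 * d ^ 2 * s * n * (3 * s) := by gcongr
        _ = _ := by ring
    have t5 : D * (2 * d * n) ≤ 2 * d * (n * s ^ 2) := by
      have : D ≤ s ^ 2 := by linarith
      calc D * (2 * d * n) ≤ s ^ 2 * (2 * d * n) := by gcongr
        _ = _ := by ring
    have t6 : n * (β * s) ^ 2 = β ^ 2 * (n * s ^ 2) := by ring
    have e : K * (n * s ^ 2) = 2 * ((n * s ^ 2) + 2 * (β ^ 2 * (n * s ^ 2)) + (2 * β + 1) * (n * s ^ 2)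
      + 48 * d ^ 2 * (n * s ^ 2) + 10 * d * (n * s ^ 2)) := by rw [hK]; ring
    rw [e]
    linarith
  have hP1 : P ≤ L * (n * s) := by
    apply abs_le_of_sq_le_sq' _ (by positivity) |>.2
    calc P ^ 2 ≤ n * (d * ψ) := hPψ
      _ ≤ n * (d * (K * (n * s ^ 2))) := by gcongr
      _ = L * (n * s) ^ 2 := by rw [hL]; ring
      _ ≤ (L * L) * (n * s) ^ 2 := by gcongr; nlinarith
      _ = _ := by ring
  have hfin : ψ + P + n * (d / 4) - I ≤ Φ + M * (D * (n * s)) := by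
    have hX : n * s ≤ D * (n * s) := by nlinarith
    have hnn : n ≤ n * s := by nlinarith
    have t2 : (β * s) ^ 2 ≤ β ^ 2 * (D * (n * s)) := by
      rw [mul_pow]; gcongr; nlinarith
    have t3 : n * (2 * (β * s) + 1) ≤ (2 * β + 1) * (D * (n * s)) := by
      calc n * (2 * (β * s) + 1) ≤ (2 * β + 1) * (n * s) := by nlinarith
        _ ≤ _ := by gcongr
    have t4 : 4 * D * P ≤ 4 * L * (D * (n * s)) := by
      calc 4 * D * P ≤ 4 * D * (L * (n * s)) := by gcongr
        _ = _ := by ring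
    have t5 : D * (2 * d * n) ≤ 2 * d * (D * (n * s)) := by
      calc D * (2 * d * n) ≤ D * (2 * d * (n * s)) := by gcongr
        _ = _ := by ring
    have t6 : P ≤ L * (D * (n * s)) := hP1.trans (by gcongr)
    have t7 : n * (d / 4) ≤ d * (D * (n * s)) := by
      have : n * (d / 4) ≤ n * d := by nlinarith
      calc n * (d / 4) ≤ d * n := by linarith
        _ ≤ d * (D * (n * s)) := by gcongr; linarith
    have e : M * (D * (n * s)) = (2 * β + 1) * (D * (n * s)) + β ^ 2 * (D * (n * s))
      + 48 * d ^ 2 * (D * (n * s)) + 4 * L * (D * (n * s)) + L * (D * (n * s))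
      + 2 * d * (D * (n * s)) + d * (D * (n * s)) := by rw [hM]; ring
    rw [e]
    have e2 : 16 * d ^ 2 * D * n * (3 * s) = 48 * d ^ 2 * (D * (n * s)) := by ring
    linarith
  have hΦ : Φ ≤ √Φ ^ 2 := by
    rcases le_total 0 Φ with h | h
    · rw [Real.sq_sqrt h]
    · exact h.trans (sq_nonneg _)
  have ea : (√Φ / (√n * s)) ^ 2 = √Φ ^ 2 / (n * s ^ 2) := by
    rw [div_pow, mul_pow, Real.sq_sqrt hn0.le]
  have eb : (√D / √s) ^ 2 = D / s := by
    rw [div_pow, Real.sq_sqrt hs0.le, Real.sq_sqrt hD0.le]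
  have hsq : (V / n) ^ 2 ≤ Q * (√Φ / (√n * s) + √D / √s) ^ 2 := by
    have k1 : V ^ 2 * (β * s) ^ 2 ≤ 16 * d * n * (√Φ ^ 2 + M * (D * (n * s))) :=
      hVe.trans (by gcongr; linarith)
    have k2 : (V / n) ^ 2 ≤ 16 * d / β ^ 2 * (√Φ ^ 2 / (n * s ^ 2) + M * (D / s)) := by
      have e : 16 * d / β ^ 2 * (√Φ ^ 2 / (n * s ^ 2) + M * (D / s)) =
        (16 * d * n * (√Φ ^ 2 + M * (D * (n * s)))) / (n ^ 2 * (β * s) ^ 2) := by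
        field_simp
      rw [e, le_div_iff₀ (by positivity)]
      calc (V / n) ^ 2 * (n ^ 2 * (β * s) ^ 2) = V ^ 2 * (β * s) ^ 2 := by field_simp
        _ ≤ _ := k1
    rw [← ea, ← eb] at k2
    refine k2.trans ?_
    rw [hQ, mul_assoc]
    gcongr
    have u1 := mul_nonneg ha0 hb0
    generalize √Φ / (√n * s) = a at *
    generalize √D / √s = b at *
    nlinarith [mul_nonneg hM0 (sq_nonneg a), sq_nonneg b, mul_nonneg hM0 u1]
  have : V / n ≤ √Q * (√Φ / (√n * s) + √D / √s) := by
    apply abs_le_of_sq_le_sq' _ (by positivity) |>.2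
    rw [mul_pow, Real.sq_sqrt hQ0]; exact hsq
  nlinarith


theorem lhs_scale {d : ℕ} (hd : 1 ≤ d) {n : ℕ} (hn : 1 ≤ n) (A : Finset (Site d)) (hA : A.card = n) :
    (volume (((n : ℝ) ^ (-(1 : ℝ) / (d : ℝ)) • box d A) ∆ unitVolBall d)).toReal ≤
      volume.real (hbox A ∆ Metric.closedBall (0 : EuclideanSpace ℝ (Fin d)) (rad d n)) / n := by
  have hn0 : (0 : ℝ) < n := by exact_mod_cast hn
  have hd0 : (0 : ℝ) < d := by exact_mod_cast hd
  set c : ℝ := (n : ℝ) ^ (-(1 : ℝ) / (d : ℝ)) with hc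
  have hc0 : 0 < c := by positivity
  have hcd : c ^ d = (n : ℝ)⁻¹ := by
    rw [hc, ← Real.rpow_natCast, ← Real.rpow_mul hn0.le, div_mul_cancel₀ _ hd0.ne', Real.rpow_neg_one]
  have hball : unitVolBall d = c • Metric.closedBall (0 : EuclideanSpace ℝ (Fin d)) (rad d n) := by
    have hw := ballVol_pos d
    rw [_root_.smul_closedBall' hc0.ne', smul_zero, Real.norm_of_nonneg hc0.le]
    unfold unitVolBall
    congr 1
    rw [hc, rad, Real.div_rpow hn0.le hw.le, neg_div, Real.rpow_neg hw.le, Real.rpow_neg hn0.le]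
    have : (n : ℝ) ^ (1 / (d : ℝ)) ≠ 0 := by positivity
    field_simp
  rw [hball, ← Set.smul_set_symmDiff₀ hc0.ne', Measure.addHaar_smul, finrank_euclideanSpace_fin,
    ENNReal.toReal_mul, hcd, ENNReal.toReal_ofReal (abs_nonneg _), abs_of_pos (by positivity)]
  have hfin : volume (hbox A ∆ Metric.closedBall (0 : EuclideanSpace ℝ (Fin d)) (rad d n)) ≠ ⊤ := by
    refine measure_ne_top_of_subset (s := hbox A ∪ Metric.closedBall 0 (rad d n)) ?_ ?_
    · rintro z (hz | hz)
      · exact Or.inl hz.1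
      · exact Or.inr hz.1
    · refine measure_union_ne_top ?_ measure_closedBall_lt_top.ne
      rw [hbox_vol]; simp
  have := ENNReal.toReal_mono hfin (symm_box_le A (Metric.closedBall 0 (rad d n)))
  rw [inv_mul_eq_div]
  exact div_le_div_of_nonneg_right this hn0.le


theorem main_theorem (d : ℕ) (hd : 1 ≤ d) :
    ∃ C : ℝ, ∀ (D : ℝ), 1 ≤ D → ∀ r : Site d → ℕ → Dir d, HasDiscrepancy d D r →
      ∀ n : ℕ, 1 ≤ n →
        (volume (((n : ℝ) ^ (-(1 : ℝ) / (d : ℝ)) • box d (aggRegion r n)) ∆ unitVolBall d)).toReal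
          ≤ C * ((n : ℝ) ^ (-(1 : ℝ) / 2 - 1 / (d : ℝ)) * PhiSum d n ^ ((1 : ℝ) / 2)
              + D ^ (1 - 1 / (8 * (d : ℝ))) * (n : ℝ) ^ (-(1 : ℝ) / (2 * (d : ℝ)))) := by
  have hd0 : (0 : ℝ) < d := by exact_mod_cast hd
  have hd1 : (1 : ℝ) ≤ d := by exact_mod_cast hd
  have hw := ballVol_pos d
  obtain ⟨β, hβ⟩ : ∃ β : ℝ, β = (ballVol d ^ ((1 : ℝ) / d))⁻¹ := ⟨_, rfl⟩
  have hβ0 : 0 < β := by rw [hβ]; positivity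
  obtain ⟨C, hC0, hC⟩ := final_real hd1 hβ0
  refine ⟨C, ?_⟩
  intro D hD r hr n hn
  have hn1 : (1 : ℝ) ≤ n := by exact_mod_cast hn
  have hn0 : (0 : ℝ) < n := by linarith
  have hD0 : 0 < D := by linarith
  obtain ⟨s, hs⟩ : ∃ s : ℝ, s = (n : ℝ) ^ ((1 : ℝ) / d) := ⟨_, rfl⟩
  have hs1 : 1 ≤ s := by rw [hs]; exact Real.one_le_rpow hn1 (by positivity)
  have hs0 : 0 < s := by linarith
  have hsn : s ^ d = n := by
    rw [hs, ← Real.rpow_natCast, ← Real.rpow_mul hn0.le, one_div_mul_cancel hd0.ne', Real.rpow_one]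
  have hsle : s ≤ n := by
    rw [← hsn]; exact le_self_pow₀ hs1 (by omega)
  have hR : rad d n = β * s := by
    rw [rad, Real.div_rpow hn0.le hw.le, hβ, hs]; field_simp
  have hR0 := rad_nonneg d hn0.le
  have hRd : rad d n ^ d * ballVol d = n := by
    rw [rad_pow hd hn0.le]; field_simp
  have hceil : ((⌈2 * s⌉₊ : ℕ) : ℝ) ≤ 3 * s := by
    have := Nat.ceil_lt_add_one (a := 2 * s) (by positivity)
    linarith
  have hceil2 : 2 * s ≤ ((⌈2 * s⌉₊ : ℕ) : ℝ) := Nat.le_ceil _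
  have hρ : 2 * n ≤ ⌈2 * s⌉₊ ^ d := by
    have h1 : (2 * s) ^ d ≤ ((⌈2 * s⌉₊ : ℕ) : ℝ) ^ d := pow_le_pow_left₀ (by positivity) hceil2 _
    rw [mul_pow, hsn] at h1
    have h2 : (2 : ℝ) ≤ 2 ^ d := le_self_pow₀ (by norm_num) (by omega)
    have h3 : (2 : ℝ) * n ≤ ((⌈2 * s⌉₊ : ℕ) : ℝ) ^ d := le_trans (by gcongr) h1
    exact_mod_cast h3
  have hρ1 : 1 ≤ ⌈2 * s⌉₊ := Nat.one_le_ceil_iff.mpr (by positivity)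
  obtain ⟨A, hA, hcard, hψ⟩ := psi_bound hd hD hr hn _ hρ hρ1
  rw [hA]
  refine (lhs_scale hd hn A hcard).trans ?_
  have hI := ball_integral hd hR0
  have hI2 : d * ballVol d * (rad d n ^ (d + 2) / (d + 2)) = n * rad d n ^ 2 * (d / (d + 2)) := by
    nth_rewrite 2 [← hRd]
    rw [pow_add]; field_simp
  rw [hI2] at hI
  have hex := excess hd hn (hbox A) (hbox_meas A) (by rw [hbox_vol, hcard]) (hbox_integrable A) hR0 hRd
  have hbi := hbox_integral A
  rw [hcard] at hbi
  have hsum := sum_rad_one_sq hd n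
  have hV2 : volume.real (hbox A ∆ Metric.closedBall (0 : EuclideanSpace ℝ (Fin d)) (rad d n)) ≤ 2 * n := by
    have h1 : volume.real (hbox A ∆ Metric.closedBall (0 : EuclideanSpace ℝ (Fin d)) (rad d n)) ≤
        volume.real (hbox A ∪ Metric.closedBall (0 : EuclideanSpace ℝ (Fin d)) (rad d n)) := by
      refine measureReal_mono ?_ (measure_union_ne_top (by rw [hbox_vol]; simp) measure_closedBall_lt_top.ne)
      rintro z (hz | hz)
      · exact Or.inl hz.1
      · exact Or.inr hz.1
    have h2 := measureReal_union_le (μ := volume) (hbox A) (Metric.closedBall (0 : EuclideanSpace ℝ (Fin d)) (rad d n))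
    have h3 : volume.real (hbox A) = n := by rw [measureReal_def, hbox_vol, hcard]; simp
    rw [ball_vol_real hR0, hRd, h3] at h2
    linarith
  have hl := l1_sq A
  rw [hcard] at hl
  have key := hC n s D (∑ x ∈ A, l1 x) (PhiSum d n) (∑ x ∈ A, nsq x)
    (n * rad d n ^ 2 * (d / (d + 2)))
    (volume.real (hbox A ∆ Metric.closedBall (0 : EuclideanSpace ℝ (Fin d)) (rad d n)))
    hn1 hs1 hsle hD (Finset.sum_nonneg fun x _ => nsq_nonneg x)
    (Finset.sum_nonneg fun x _ => Finset.sum_nonneg fun i _ => abs_nonneg _)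
    measureReal_nonneg hV2 hl
    (by
      rw [← hR]
      have : (d : ℝ) / (d + 2) ≤ 1 := by rw [div_le_one (by positivity)]; linarith
      exact mul_le_of_le_one_right (by positivity) this)
    (by
      rw [← hR]
      have : 16 * (d : ℝ) ^ 2 * D * n * ((⌈2 * s⌉₊ : ℕ) : ℝ) ≤ 16 * (d : ℝ) ^ 2 * D * n * (3 * s) := by
        gcongr
      linarith)
    (by
      rw [← hR]
      refine hex.trans ?_
      rw [hI]
      gcongr)
  refine key.trans ?_
  have e1 : √(PhiSum d n) / (√n * s) = (n : ℝ) ^ (-(1 : ℝ) / 2 - 1 / (d : ℝ)) * PhiSum d n ^ ((1 : ℝ) / 2) := by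
    rw [← Real.sqrt_eq_rpow, Real.rpow_sub hn0, ← hs, neg_div, Real.rpow_neg hn0.le,
      ← Real.sqrt_eq_rpow]
    field_simp
  have e2 : √D / √s ≤ D ^ (1 - 1 / (8 * (d : ℝ))) * (n : ℝ) ^ (-(1 : ℝ) / (2 * (d : ℝ))) := by
    have h1 : √D ≤ D ^ (1 - 1 / (8 * (d : ℝ))) := by
      rw [Real.sqrt_eq_rpow]
      apply Real.rpow_le_rpow_of_exponent_le hD
      have : 1 / (8 * (d : ℝ)) ≤ 1 / 2 := by
        apply one_div_le_one_div_of_le (by norm_num); linarith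
      linarith
    have h2 : (n : ℝ) ^ (-(1 : ℝ) / (2 * (d : ℝ))) = (√s)⁻¹ := by
      rw [Real.sqrt_eq_rpow, hs, ← Real.rpow_mul hn0.le, ← Real.rpow_neg hn0.le]
      congr 1
      field_simp
    rw [h2, div_eq_mul_inv]
    gcongr
  rw [e1]
  gcongr

end RotorRouterPaper
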